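/- For every real k ≠ 0 and every fixed u ∈ ℝ, the function Φ_{τ,k}(u) satisfies, as τ → 0+, Φ_{τ,k}(u) = e^{−ζ(k)²u²/2}·(1 + φ₁(k,u)·τ^{1/8} + φ₂(k,u)·τ^{1/4} + O(τ^{3/8})). -/

import Mathlib

open Filter Topology Asymptotics MeasureTheory


noncomputable section


/-- sign convention of the paper: 1 if `0 ≤ x`, -1 otherwise. -/
def sgn' (x : ℝ) : ℝ := if 0 ≤ x then 1 else -1

/-- principal-branch complex square root `d` of the Heston Riccati discriminant. -/
def hestD (κ ρ ξ : ℝ) (w : ℂ) : ℂ :=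
  (((κ : ℂ) - (ρ : ℂ) * (ξ : ℂ) * w) ^ 2 + w * (1 - w) * (ξ : ℂ) ^ 2) ^ ((1 : ℂ) / 2)

def hestGamma (κ ρ ξ : ℝ) (w : ℂ) : ℂ :=
  ((κ : ℂ) - (ρ : ℂ) * (ξ : ℂ) * w - hestD κ ρ ξ w) /
    ((κ : ℂ) - (ρ : ℂ) * (ξ : ℂ) * w + hestD κ ρ ξ w)

def hestB (κ ρ ξ : ℝ) (w : ℂ) (τ : ℝ) : ℂ :=
  (((κ : ℂ) - (ρ : ℂ) * (ξ : ℂ) * w - hestD κ ρ ξ w) / (ξ : ℂ) ^ 2) *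
    ((1 - Complex.exp (-(hestD κ ρ ξ w) * (τ : ℂ))) /
      (1 - hestGamma κ ρ ξ w * Complex.exp (-(hestD κ ρ ξ w) * (τ : ℂ))))

def hestA (κ θ ρ ξ : ℝ) (w : ℂ) (τ : ℝ) : ℂ :=
  ((κ * θ / ξ ^ 2 : ℝ) : ℂ) *
    (((κ : ℂ) - (ρ : ℂ) * (ξ : ℂ) * w - hestD κ ρ ξ w) * (τ : ℂ) -
      2 * Complex.log ((1 - hestGamma κ ρ ξ w * Complex.exp (-(hestD κ ρ ξ w) * (τ : ℂ))) /
        (1 - hestGamma κ ρ ξ w)))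

def betaT (κ ξ t : ℝ) : ℝ := ξ ^ 2 * (1 - Real.exp (-(κ * t))) / (4 * κ)

/-- explicit Heston forward log-mgf `G_τ(w)`. -/
def hestG (κ θ ξ v ρ t : ℝ) (w : ℂ) (τ : ℝ) : ℂ :=
  hestA κ θ ρ ξ w τ +
    hestB κ ρ ξ w τ * (v : ℂ) * ((Real.exp (-(κ * t)) : ℝ) : ℂ) /
      (1 - 2 * (betaT κ ξ t : ℂ) * hestB κ ρ ξ w τ) -
    ((2 * κ * θ / ξ ^ 2 : ℝ) : ℂ) *
      Complex.log (1 - 2 * (betaT κ ξ t : ℂ) * hestB κ ρ ξ w τ)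

/-- rescaled forward log-mgf, for complex argument. -/
def hestLambdaC (κ θ ξ v ρ t τ : ℝ) (z : ℂ) : ℂ :=
  ((Real.sqrt τ : ℝ) : ℂ) * hestG κ θ ξ v ρ t (z / ((Real.sqrt τ : ℝ) : ℂ)) τ

/-- rescaled forward log-mgf `Λ_τ(u) = √τ · G_τ(u/√τ)`. -/
def hestLambda (κ θ ξ v ρ t τ : ℝ) (u : ℝ) : ℂ :=
  hestLambdaC κ θ ξ v ρ t τ (u : ℂ)

/-- `D_{t,τ}`: the maximal open interval containing `0` on which `Λ_τ` is real-valued. -/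
def hestDom (κ θ ξ v ρ t τ : ℝ) : Set ℝ :=
  connectedComponentIn (interior {u : ℝ | (hestLambda κ θ ξ v ρ t τ u).im = 0}) 0



def B1hat (ρ ξ u : ℝ) : ℝ := u / 4 * (u ^ 2 * ρ * ξ - 2)
/-- the derivative of `B1hat` in `u`. -/
def B1hat' (ρ ξ u : ℝ) : ℝ := (3 * u ^ 2 * ρ * ξ - 2) / 4

def coefA0 (κ θ ξ v ρ t k : ℝ) : ℝ := sgn' k / Real.sqrt (betaT κ ξ t)

def coefA1 (κ θ ξ v ρ t k : ℝ) : ℝ :=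
  -(coefA0 κ θ ξ v ρ t k) * Real.sqrt v * Real.exp (-(κ * t) / 2) /
    (2 * Real.sqrt |k| * betaT κ ξ t ^ ((1 : ℝ) / 4))

def coefA2 (κ θ ξ v ρ t k : ℝ) : ℝ :=
  -(κ * θ) / (k * ξ ^ 2) - B1hat ρ ξ (coefA0 κ θ ξ v ρ t k) / coefA0 κ θ ξ v ρ t k

def coefA3 (κ θ ξ v ρ t k : ℝ) : ℝ :=
  (2 * betaT κ ξ t * coefA1 κ θ ξ v ρ t k ^ 3 / (ξ ^ 4 * v ^ 2)) *
    (ξ ^ 2 * v * betaT κ ξ t * Real.exp (κ * t) *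
        (|k| * ξ ^ 2 * Real.sqrt (betaT κ ξ t) * B1hat ρ ξ (coefA0 κ θ ξ v ρ t k) -
          k * ξ ^ 2 * B1hat' ρ ξ (coefA0 κ θ ξ v ρ t k) - κ * θ) +
      (2 * κ * θ * betaT κ ξ t * Real.exp (κ * t)) ^ 2 - ξ ^ 4 * v ^ 2 / 16)

def coefE0 (κ θ ξ v ρ t k : ℝ) : ℝ := -2 * coefA1 κ θ ξ v ρ t k / coefA0 κ θ ξ v ρ t k

def coefR (κ θ ξ v ρ t k : ℝ) : ℝ :=
  coefA1 κ θ ξ v ρ t k ^ 2 / 2 - κ * θ / (|k| * ξ ^ 2 * Real.sqrt (betaT κ ξ t))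

def coefE1 (κ θ ξ v ρ t k : ℝ) : ℝ := -2 * betaT κ ξ t * coefR κ θ ξ v ρ t k

def coefE2 (κ θ ξ v ρ t k : ℝ) : ℝ :=
  -2 * betaT κ ξ t *
    (coefA1 κ θ ξ v ρ t k * coefA2 κ θ ξ v ρ t k + coefA0 κ θ ξ v ρ t k * coefA3 κ θ ξ v ρ t k +
      coefA1 κ θ ξ v ρ t k * B1hat' ρ ξ (coefA0 κ θ ξ v ρ t k))

def coefZeta (κ θ ξ v ρ t k : ℝ) : ℝ :=
  2 * Real.sqrt v * Real.exp (-(κ * t) / 2) / coefE0 κ θ ξ v ρ t k ^ ((3 : ℝ) / 2)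

def coefPsi0 (κ θ ξ v ρ t k : ℝ) : ℝ :=
  (coefA0 κ θ ξ v ρ t k * v * Real.exp (-(κ * t)) / coefE0 κ θ ξ v ρ t k ^ 3) *
    (coefE0 κ θ ξ v ρ t k ^ 2 +
      coefA0 κ θ ξ v ρ t k * betaT κ ξ t *
        (3 * coefA1 κ θ ξ v ρ t k * coefE0 κ θ ξ v ρ t k -
          2 * coefA0 κ θ ξ v ρ t k * coefE1 κ θ ξ v ρ t k))

def coefPsi1 (κ θ ξ v ρ t k : ℝ) : ℝ :=
  -4 * coefA0 κ θ ξ v ρ t k * v * betaT κ ξ t * Real.exp (-(κ * t)) / coefE0 κ θ ξ v ρ t k ^ 4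

def coefPsi2 (κ θ ξ v ρ t k : ℝ) : ℝ :=
  (v * Real.exp (-(κ * t)) / (2 * coefE0 κ θ ξ v ρ t k ^ 4)) *
    (4 * coefA0 κ θ ξ v ρ t k * betaT κ ξ t *
        (3 * coefA0 κ θ ξ v ρ t k * coefE1 κ θ ξ v ρ t k -
          4 * coefA1 κ θ ξ v ρ t k * coefE0 κ θ ξ v ρ t k) -
      5 * coefE0 κ θ ξ v ρ t k ^ 2)

def coefPsi3 (κ θ ξ v ρ t k : ℝ) : ℝ :=
  8 * v * betaT κ ξ t * Real.exp (-(κ * t)) / coefE0 κ θ ξ v ρ t k ^ 5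

def coefPsi4 (κ θ ξ v ρ t k : ℝ) : ℝ :=
  (v * Real.exp (-(κ * t)) / (2 * coefE0 κ θ ξ v ρ t k ^ 3)) *
    ((coefE1 κ θ ξ v ρ t k ^ 2 - coefE0 κ θ ξ v ρ t k * coefE2 κ θ ξ v ρ t k) / betaT κ ξ t -
      2 * coefA0 κ θ ξ v ρ t k * coefA1 κ θ ξ v ρ t k * coefE0 κ θ ξ v ρ t k *
        coefE1 κ θ ξ v ρ t k +
      2 * coefE0 κ θ ξ v ρ t k ^ 2 * coefR κ θ ξ v ρ t k)

def coefPhi2a (κ θ ξ v ρ t k : ℝ) : ℝ :=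
  coefPsi2 κ θ ξ v ρ t k - coefPsi0 κ θ ξ v ρ t k ^ 2 / 2 -
    (4 * κ * θ * betaT κ ξ t / ξ ^ 2) * (2 * κ * θ + ξ ^ 2) / (coefE0 κ θ ξ v ρ t k ^ 2 * ξ ^ 2) -
    (4 * κ * θ * betaT κ ξ t / ξ ^ 2) *
      (coefA0 κ θ ξ v ρ t k * coefPsi0 κ θ ξ v ρ t k / coefE0 κ θ ξ v ρ t k)

def coefPhi2b (κ θ ξ v ρ t k : ℝ) : ℝ :=
  coefPsi3 κ θ ξ v ρ t k - coefPsi0 κ θ ξ v ρ t k * coefPsi1 κ θ ξ v ρ t k -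
    (4 * κ * θ * betaT κ ξ t / ξ ^ 2) *
      (coefA0 κ θ ξ v ρ t k * coefPsi1 κ θ ξ v ρ t k / coefE0 κ θ ξ v ρ t k)

def coefPhi2c (κ θ ξ v ρ t k : ℝ) : ℝ := -(coefPsi1 κ θ ξ v ρ t k ^ 2) / 2

def coefC0 (κ θ ξ v ρ t k : ℝ) : ℝ := 2 * |coefA1 κ θ ξ v ρ t k * k|

def coefC1 (κ θ ξ v ρ t k : ℝ) : ℝ :=
  (v * Real.exp (-(κ * t)) / coefE0 κ θ ξ v ρ t k) *
      (coefA0 κ θ ξ v ρ t k * coefA1 κ θ ξ v ρ t k -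
        coefE1 κ θ ξ v ρ t k / (2 * betaT κ ξ t * coefE0 κ θ ξ v ρ t k)) -
    coefA2 κ θ ξ v ρ t k * k

def coefC2 (κ θ ξ v ρ t k : ℝ) : ℝ := coefE0 κ θ ξ v ρ t k ^ (-(2 * κ * θ / ξ ^ 2))

def coefZ1 (κ θ ξ v ρ t k : ℝ) : ℝ :=
  coefPsi4 κ θ ξ v ρ t k - coefA3 κ θ ξ v ρ t k * k -
    (2 * κ * θ / ξ ^ 2) * (coefE1 κ θ ξ v ρ t k / coefE0 κ θ ξ v ρ t k)

def coefP1 (κ θ ξ v ρ t k : ℝ) : ℝ :=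
  coefE0 κ θ ξ v ρ t k + coefPhi2a κ θ ξ v ρ t k / coefZeta κ θ ξ v ρ t k ^ 2 +
    3 * coefPhi2b κ θ ξ v ρ t k / coefZeta κ θ ξ v ρ t k ^ 4 +
    15 * coefPhi2c κ θ ξ v ρ t k / coefZeta κ θ ξ v ρ t k ^ 6

def phi1C (κ θ ξ v ρ t k u : ℝ) : ℂ :=
  Complex.I * (u : ℂ) *
      ((coefPsi0 κ θ ξ v ρ t k +
          4 * coefA0 κ θ ξ v ρ t k * κ * θ * betaT κ ξ t / (coefE0 κ θ ξ v ρ t k * ξ ^ 2) : ℝ) : ℂ) +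
    Complex.I * (u : ℂ) ^ 3 * ((coefPsi1 κ θ ξ v ρ t k : ℝ) : ℂ)

def phi2R (κ θ ξ v ρ t k u : ℝ) : ℝ :=
  u ^ 2 * coefPhi2a κ θ ξ v ρ t k + u ^ 4 * coefPhi2b κ θ ξ v ρ t k +
    u ^ 6 * coefPhi2c κ θ ξ v ρ t k


/-- the characteristic function `Φ_{τ,k}(u)` under the asymptotic measure change. -/
def hestPhi (κ θ ξ v ρ t k : ℝ) (ustar : ℝ → ℝ) (τ u : ℝ) : ℂ :=
  Complex.exp (-(Complex.I) * (u : ℂ) * (k : ℂ) * ((τ ^ (-(1 : ℝ) / 8) : ℝ) : ℂ) +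
    ((τ ^ (-(1 : ℝ) / 2) : ℝ) : ℂ) *
      (hestLambdaC κ θ ξ v ρ t τ
          ((ustar τ : ℝ) + Complex.I * (u : ℂ) * ((τ ^ ((3 : ℝ) / 8) : ℝ) : ℂ)) -
        hestLambdaC κ θ ξ v ρ t τ ((ustar τ : ℝ) : ℂ)))

/-!
Write `s = √τ` and `z = s w`. In the variable `z` the square-root branches in `A` and `B` cancel
and both become expressions in the entire functions `cosh √y` and `sinh √y / √y`, so that `A = O(s)`
and `B = z²/2 + O(s)` uniformly on compact sets; Cauchy's estimate turns this into the same bounds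
for the derivatives. Since `1 - 2βB` is then close to `1 - β z²`, the real points beyond its zeros
give the logarithm an imaginary part and are not in `D_{t,τ}`; the saddle point therefore lies where
`e = 1 - 2βB` is positive, and the saddle equation, in which `x = τ^(1/8)`, reads
`k = x⁴ (A' + B' (V / e² + 2αβ / e))`. It forces `e` to be of order `x²`, and bootstrapping gives
the expansions of `e / x²` and of the saddle point to second order in `x`.

The term `-iuk τ^(-1/8)` cancels the linear term of the exponent of `Φ` at the saddle point, which
is thus a Taylor remainder of `G`; the increment `i u x³` being small compared with `e`, that
remainder expands to second order in `x`, and exponentiating the expansion gives the theorem.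
-/

open ComplexConjugate

/-! ### Entire functions `cosh √y` and `sinh √y / √y` -/

/-- The entire function `cosh √y`, free of the branch of the square root. -/
def coshSqrt (y : ℂ) : ℂ := ∑' n : ℕ, y ^ n / ((2 * n).factorial : ℂ)

/-- The entire function `sinh √y / √y`, free of the branch of the square root; its value at `0`
is `1`. -/
def sinhcSqrt (y : ℂ) : ℂ := ∑' n : ℕ, y ^ n / ((2 * n + 1).factorial : ℂ)

lemma coshSqrt_sq (m : ℂ) : coshSqrt (m ^ 2) = Complex.cosh m := by
  rw [coshSqrt, ← (Complex.hasSum_cosh m).tsum_eq]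
  simp only [pow_mul]

lemma mul_sinhcSqrt_sq (m : ℂ) : m * sinhcSqrt (m ^ 2) = Complex.sinh m := by
  rw [sinhcSqrt, ← (Complex.hasSum_sinh m).tsum_eq, ← tsum_mul_left]
  exact tsum_congr fun n => by ring

lemma coshSqrt_zero : coshSqrt 0 = 1 := by
  simpa using coshSqrt_sq 0

lemma sinhcSqrt_zero : sinhcSqrt 0 = 1 := by
  rw [sinhcSqrt, tsum_eq_single 0 fun n hn => by simp [hn]]
  simp

lemma differentiable_tsum_pow_div_factorial {g : ℕ → ℕ} (hg : ∀ n, n ≤ g n) :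
    Differentiable ℂ fun y : ℂ => ∑' n : ℕ, y ^ n / ((g n).factorial : ℂ) := by
  intro y
  have hball : DifferentiableOn ℂ (fun y : ℂ => ∑' n : ℕ, y ^ n / ((g n).factorial : ℂ))
      (Metric.ball 0 (‖y‖ + 1)) := by
    refine Complex.differentiableOn_tsum_of_summable_norm
      (Real.summable_pow_div_factorial (‖y‖ + 1)) (fun n => ?_) Metric.isOpen_ball
      fun n w hw => ?_
    · exact Differentiable.differentiableOn (by fun_prop)
    · rw [norm_div, norm_pow, Complex.norm_natCast]
      have hw' : ‖w‖ ≤ ‖y‖ + 1 := (mem_ball_zero_iff.mp hw).le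
      gcongr
      exact hg n
  exact hball.differentiableAt (Metric.isOpen_ball.mem_nhds (by simp))

lemma differentiable_coshSqrt : Differentiable ℂ coshSqrt :=
  differentiable_tsum_pow_div_factorial fun n => by omega

lemma differentiable_sinhcSqrt : Differentiable ℂ sinhcSqrt :=
  differentiable_tsum_pow_div_factorial fun n => by omega

lemma conj_coshSqrt (y : ℂ) : conj (coshSqrt y) = coshSqrt (conj y) := by
  simp only [coshSqrt, Complex.conj_tsum, map_div₀, map_pow, map_natCast]

lemma conj_sinhcSqrt (y : ℂ) : conj (sinhcSqrt y) = sinhcSqrt (conj y) := by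
  simp only [sinhcSqrt, Complex.conj_tsum, map_div₀, map_pow, map_natCast]

lemma two_mul_exp_neg_mul_coshSqrt_sq (m : ℂ) :
    2 * Complex.exp (-m) * coshSqrt (m ^ 2) = 1 + Complex.exp (-(2 * m)) := by
  have hexp : Complex.exp (-m) * Complex.exp m = 1 := by simp [← Complex.exp_add]
  have hsq : Complex.exp (-(2 * m)) = Complex.exp (-m) ^ 2 := by
    rw [← Complex.exp_nat_mul]; congr 1; push_cast; ring
  rw [coshSqrt_sq, Complex.cosh, hsq]
  linear_combination hexp

lemma two_mul_exp_neg_mul_sinhcSqrt_sq (m : ℂ) :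
    2 * Complex.exp (-m) * (m * sinhcSqrt (m ^ 2)) = 1 - Complex.exp (-(2 * m)) := by
  have hexp : Complex.exp (-m) * Complex.exp m = 1 := by simp [← Complex.exp_add]
  have hsq : Complex.exp (-(2 * m)) = Complex.exp (-m) ^ 2 := by
    rw [← Complex.exp_nat_mul]; congr 1; push_cast; ring
  rw [mul_sinhcSqrt_sq, Complex.sinh, hsq]
  linear_combination hexp

lemma log_exp_neg_mul {m D : ℂ} (hm : ‖m‖ < 1) (hD : 0 < D.re) :
    Complex.log (Complex.exp (-m) * D) = -m + Complex.log D := by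
  have hD0 : D ≠ 0 := by rintro rfl; simp at hD
  have him : |m.im| < 1 := (Complex.abs_im_le_norm m).trans_lt hm
  have harg : |D.arg| < Real.pi / 2 := Complex.abs_arg_lt_pi_div_two_iff.mpr (Or.inl hD)
  have hpi := Real.pi_gt_three
  rw [abs_lt] at him harg
  conv_lhs => rw [← Complex.exp_log hD0, ← Complex.exp_add]
  apply Complex.log_exp <;> rw [Complex.add_im, Complex.neg_im, Complex.log_im] <;> linarith

/-! ### Branch-free form of the log-mgf -/

/-- The numerator `κ − ρ ξ w` of the paper at `w = z/s`, multiplied by `s`. -/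
def scaledDrift (κ ρ ξ s : ℝ) (z : ℂ) : ℂ := κ * s - ρ * ξ * z

/-- The square of the half phase `d(w) τ / 2` at `w = z/s`, `τ = s²`; it is polynomial in `z`. -/
def halfPhaseSq (κ ρ ξ s : ℝ) (z : ℂ) : ℂ :=
  (s : ℂ) ^ 2 * (scaledDrift κ ρ ξ s z ^ 2 + z * (s - z) * (ξ : ℂ) ^ 2) / 4

/-- The common denominator of `A` and `B` with the factor `e^{-dτ/2}` removed:
`e^{dτ/2} (1 − γ e^{-dτ}) / (1 − γ)` at `w = z/s`, `τ = s²`. -/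
def smoothDenom (κ ρ ξ s : ℝ) (z : ℂ) : ℂ :=
  coshSqrt (halfPhaseSq κ ρ ξ s z) +
    s * scaledDrift κ ρ ξ s z / 2 * sinhcSqrt (halfPhaseSq κ ρ ξ s z)

/-- The branch-free form of `B(w, τ)` at `w = z/s`, `τ = s²`. -/
def smoothB (κ ρ ξ s : ℝ) (z : ℂ) : ℂ :=
  z * (z - s) / 2 * (sinhcSqrt (halfPhaseSq κ ρ ξ s z) / smoothDenom κ ρ ξ s z)

/-- The branch-free form of `A(w, τ)` at `w = z/s`, `τ = s²`. -/
def smoothA (κ θ ρ ξ s : ℝ) (z : ℂ) : ℂ :=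
  ((κ * θ / ξ ^ 2 : ℝ) : ℂ) *
    (s * scaledDrift κ ρ ξ s z - 2 * Complex.log (smoothDenom κ ρ ξ s z))

/-- The exponent `2κθ/ξ²` of the stationary gamma law of the variance. -/
def cirShape (κ θ ξ : ℝ) : ℝ := 2 * κ * θ / ξ ^ 2

/-- The contribution `v e^{-κt}` of the initial variance to the variance at time `t`. -/
def decayedVar (κ v t : ℝ) : ℝ := v * Real.exp (-(κ * t))

/-- The log-mgf at `b` of a scaled noncentral chi-squared variable, the law of the variance at
the forward-start date: scale `β`, shape `α`, noncentrality `V`. -/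
def cirLogMgf (V α β : ℝ) (b : ℂ) : ℂ :=
  V * b / (1 - 2 * β * b) - α * Complex.log (1 - 2 * β * b)

/-- The branch-free form of `G_τ(w)` at `w = z/s`, `τ = s²`. -/
def smoothG (κ θ ξ v ρ t s : ℝ) (z : ℂ) : ℂ :=
  smoothA κ θ ρ ξ s z +
    cirLogMgf (decayedVar κ v t) (cirShape κ θ ξ) (betaT κ ξ t) (smoothB κ ρ ξ s z)

section Identification

variable {κ θ ρ ξ s : ℝ} {w : ℂ}

lemma hestD_sq : hestD κ ρ ξ w ^ 2 = (κ - ρ * ξ * w) ^ 2 + w * (1 - w) * (ξ : ℂ) ^ 2 := by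
  rw [hestD, one_div]
  exact Complex.cpow_nat_inv_pow _ two_ne_zero

lemma halfPhaseSq_mul : halfPhaseSq κ ρ ξ s (s * w) = (hestD κ ρ ξ w * s ^ 2 / 2) ^ 2 := by
  rw [halfPhaseSq, scaledDrift, div_pow, mul_pow, hestD_sq]
  ring

lemma exp_neg_hestD_mul : Complex.exp (-hestD κ ρ ξ w * ((s ^ 2 : ℝ) : ℂ)) =
    Complex.exp (-(2 * (hestD κ ρ ξ w * s ^ 2 / 2))) := by
  congr 1; push_cast; ring

lemma drift_add_hestD_ne_zero (hξ : ξ ≠ 0) (hw0 : w ≠ 0) (hw1 : w ≠ 1) :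
    (κ : ℂ) - ρ * ξ * w + hestD κ ρ ξ w ≠ 0 := by
  intro h
  have hzero : w * (1 - w) * (ξ : ℂ) ^ 2 = 0 := by
    linear_combination (hestD κ ρ ξ w - (κ - ρ * ξ * w)) * h - hestD_sq (κ := κ) (ρ := ρ)
  have hξ' : (ξ : ℂ) ≠ 0 := Complex.ofReal_ne_zero.mpr hξ
  exact mul_ne_zero (mul_ne_zero hw0 (sub_ne_zero.mpr hw1.symm)) (pow_ne_zero 2 hξ') hzero

lemma one_sub_hestGamma (h : (κ : ℂ) - ρ * ξ * w + hestD κ ρ ξ w ≠ 0) :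
    1 - hestGamma κ ρ ξ w = 2 * hestD κ ρ ξ w / (κ - ρ * ξ * w + hestD κ ρ ξ w) := by
  rw [hestGamma, one_sub_div h]
  ring

lemma one_sub_hestGamma_mul_exp (h : (κ : ℂ) - ρ * ξ * w + hestD κ ρ ξ w ≠ 0) :
    1 - hestGamma κ ρ ξ w * Complex.exp (-hestD κ ρ ξ w * ((s ^ 2 : ℝ) : ℂ)) =
      2 * Complex.exp (-(hestD κ ρ ξ w * s ^ 2 / 2)) * hestD κ ρ ξ w *
        smoothDenom κ ρ ξ s (s * w) / (κ - ρ * ξ * w + hestD κ ρ ξ w) := by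
  have hcosh := two_mul_exp_neg_mul_coshSqrt_sq (hestD κ ρ ξ w * s ^ 2 / 2)
  have hsinh := two_mul_exp_neg_mul_sinhcSqrt_sq (hestD κ ρ ξ w * s ^ 2 / 2)
  rw [eq_div_iff h, exp_neg_hestD_mul, hestGamma, div_mul_eq_mul_div, one_sub_mul,
    div_mul_cancel₀ _ h, smoothDenom, halfPhaseSq_mul, scaledDrift]
  linear_combination -(hestD κ ρ ξ w) * hcosh - (κ - ρ * ξ * w) * hsinh

lemma hestB_eq_smoothB (hξ : ξ ≠ 0) (hs : s ≠ 0) (hw0 : w ≠ 0) (hw1 : w ≠ 1)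
    (hd : hestD κ ρ ξ w ≠ 0) (hD : smoothDenom κ ρ ξ s (s * w) ≠ 0) :
    hestB κ ρ ξ w (s ^ 2) = smoothB κ ρ ξ s (s * w) := by
  have hs' : (s : ℂ) ≠ 0 := Complex.ofReal_ne_zero.mpr hs
  have hξ' : (ξ : ℂ) ≠ 0 := Complex.ofReal_ne_zero.mpr hξ
  have hpd := drift_add_hestD_ne_zero (κ := κ) (ρ := ρ) hξ hw0 hw1
  have hsinh := two_mul_exp_neg_mul_sinhcSqrt_sq (hestD κ ρ ξ w * s ^ 2 / 2)
  have hroots : (κ : ℂ) - ρ * ξ * w - hestD κ ρ ξ w =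
      w * (w - 1) * (ξ : ℂ) ^ 2 / (κ - ρ * ξ * w + hestD κ ρ ξ w) := by
    rw [eq_div_iff hpd]
    linear_combination -hestD_sq (κ := κ) (ρ := ρ) (ξ := ξ) (w := w)
  rw [hestB, one_sub_hestGamma_mul_exp hpd, exp_neg_hestD_mul, ← hsinh, smoothB,
    halfPhaseSq_mul, hroots]
  generalize (κ : ℂ) - ρ * ξ * w + hestD κ ρ ξ w = p at hpd ⊢
  generalize smoothDenom κ ρ ξ s (s * w) = D at hD ⊢
  field_simp

lemma hestA_eq_smoothA (hξ : ξ ≠ 0) (hw0 : w ≠ 0) (hw1 : w ≠ 1) (hd : hestD κ ρ ξ w ≠ 0)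
    (hphase : ‖halfPhaseSq κ ρ ξ s (s * w)‖ < 1) (hD : 0 < (smoothDenom κ ρ ξ s (s * w)).re) :
    hestA κ θ ρ ξ w (s ^ 2) = smoothA κ θ ρ ξ s (s * w) := by
  have hpd := drift_add_hestD_ne_zero (κ := κ) (ρ := ρ) hξ hw0 hw1
  have hm : ‖hestD κ ρ ξ w * s ^ 2 / 2‖ < 1 := by
    rw [halfPhaseSq_mul, norm_pow] at hphase
    exact (sq_lt_one_iff₀ (norm_nonneg _)).mp hphase
  have hratio : (1 - hestGamma κ ρ ξ w * Complex.exp (-hestD κ ρ ξ w * ((s ^ 2 : ℝ) : ℂ))) /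
      (1 - hestGamma κ ρ ξ w) =
      Complex.exp (-(hestD κ ρ ξ w * s ^ 2 / 2)) * smoothDenom κ ρ ξ s (s * w) := by
    rw [one_sub_hestGamma_mul_exp hpd, one_sub_hestGamma hpd]
    generalize (κ : ℂ) - ρ * ξ * w + hestD κ ρ ξ w = p at hpd ⊢
    field_simp
  rw [hestA, hratio, log_exp_neg_mul hm hD, smoothA, scaledDrift]
  push_cast; ring

end Identification

lemma hestLambdaC_eq_smoothG {κ θ ξ v ρ t s : ℝ} {z : ℂ} (hξ : ξ ≠ 0) (hs : 0 < s) (hz : z ≠ 0)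
    (hzs : z ≠ s) (hphase0 : halfPhaseSq κ ρ ξ s z ≠ 0) (hphase : ‖halfPhaseSq κ ρ ξ s z‖ < 1)
    (hD : 0 < (smoothDenom κ ρ ξ s z).re) :
    hestLambdaC κ θ ξ v ρ t (s ^ 2) z = s * smoothG κ θ ξ v ρ t s z := by
  have hs' : (s : ℂ) ≠ 0 := Complex.ofReal_ne_zero.mpr hs.ne'
  obtain ⟨w, rfl⟩ : ∃ w, z = s * w := ⟨z / s, by field_simp⟩
  have hw0 : w ≠ 0 := right_ne_zero_of_mul hz
  have hw1 : w ≠ 1 := by rintro rfl; simp at hzs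
  have hd : hestD κ ρ ξ w ≠ 0 := by
    intro h
    rw [halfPhaseSq_mul, h] at hphase0
    simp at hphase0
  have hD0 : smoothDenom κ ρ ξ s (s * w) ≠ 0 := by intro h; simp [h] at hD
  rw [hestLambdaC, Real.sqrt_sq hs.le, mul_div_cancel_left₀ _ hs', hestG,
    hestA_eq_smoothA hξ hw0 hw1 hd hphase hD, hestB_eq_smoothB hξ hs.ne' hw0 hw1 hd hD0,
    smoothG, cirLogMgf, decayedVar, cirShape]
  push_cast; ring

section Conjugation

variable {κ θ ρ ξ s : ℝ} {z : ℂ}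

lemma conj_scaledDrift : conj (scaledDrift κ ρ ξ s z) = scaledDrift κ ρ ξ s (conj z) := by
  simp [scaledDrift]

lemma conj_halfPhaseSq : conj (halfPhaseSq κ ρ ξ s z) = halfPhaseSq κ ρ ξ s (conj z) := by
  simp [halfPhaseSq, conj_scaledDrift, map_ofNat]

lemma conj_smoothDenom : conj (smoothDenom κ ρ ξ s z) = smoothDenom κ ρ ξ s (conj z) := by
  simp [smoothDenom, conj_scaledDrift, conj_halfPhaseSq, conj_coshSqrt, conj_sinhcSqrt,
    map_ofNat]

lemma conj_smoothB : conj (smoothB κ ρ ξ s z) = smoothB κ ρ ξ s (conj z) := by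
  simp [smoothB, conj_halfPhaseSq, conj_smoothDenom, conj_sinhcSqrt, map_ofNat]

lemma conj_smoothA (hD : 0 < (smoothDenom κ ρ ξ s z).re) :
    conj (smoothA κ θ ρ ξ s z) = smoothA κ θ ρ ξ s (conj z) := by
  have harg : (smoothDenom κ ρ ξ s z).arg ≠ Real.pi := by
    rw [Ne, Complex.arg_eq_pi_iff]
    exact fun h => hD.not_gt h.1
  simp [smoothA, conj_scaledDrift, ← conj_smoothDenom, Complex.log_conj _ harg, map_ofNat]

lemma ofReal_re_smoothB (u : ℝ) : ((smoothB κ ρ ξ s u).re : ℂ) = smoothB κ ρ ξ s u :=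
  Complex.conj_eq_iff_re.mp (by rw [conj_smoothB, Complex.conj_ofReal])

lemma ofReal_re_deriv_smoothB (u : ℝ) :
    ((deriv (smoothB κ ρ ξ s) u).re : ℂ) = deriv (smoothB κ ρ ξ s) u := by
  have hfun : conj ∘ smoothB κ ρ ξ s ∘ conj = smoothB κ ρ ξ s := by
    ext z
    simp [conj_smoothB]
  refine Complex.conj_eq_iff_re.mp ?_
  conv_rhs => rw [← hfun, deriv_conj_conj]
  simp only [Function.comp_apply, Complex.conj_ofReal]

lemma ofReal_re_smoothA {u : ℝ} (hD : 0 < (smoothDenom κ ρ ξ s u).re) :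
    ((smoothA κ θ ρ ξ s u).re : ℂ) = smoothA κ θ ρ ξ s u :=
  Complex.conj_eq_iff_re.mp (by rw [conj_smoothA hD, Complex.conj_ofReal])

end Conjugation

section Differentiability

lemma differentiable_halfPhaseSq (κ ρ ξ s : ℝ) : Differentiable ℂ (halfPhaseSq κ ρ ξ s) := by
  unfold halfPhaseSq scaledDrift
  fun_prop

lemma differentiable_smoothDenom (κ ρ ξ s : ℝ) : Differentiable ℂ (smoothDenom κ ρ ξ s) := by
  have hcosh := differentiable_coshSqrt.comp (differentiable_halfPhaseSq κ ρ ξ s)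
  have hsinh := differentiable_sinhcSqrt.comp (differentiable_halfPhaseSq κ ρ ξ s)
  simp only [Function.comp_def] at hcosh hsinh
  unfold smoothDenom scaledDrift
  fun_prop

variable {κ θ ρ ξ s : ℝ} {z : ℂ}

lemma differentiableAt_smoothB (hD : smoothDenom κ ρ ξ s z ≠ 0) :
    DifferentiableAt ℂ (smoothB κ ρ ξ s) z := by
  have hsinh := differentiable_sinhcSqrt.comp (differentiable_halfPhaseSq κ ρ ξ s)
  exact .mul (by fun_prop) ((hsinh z).div (differentiable_smoothDenom κ ρ ξ s z) hD)

lemma differentiableAt_smoothA (hD : 0 < (smoothDenom κ ρ ξ s z).re) :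
    DifferentiableAt ℂ (smoothA κ θ ρ ξ s) z := by
  have hlog := (differentiable_smoothDenom κ ρ ξ s z).clog
    (Complex.mem_slitPlane_iff.mpr (Or.inl hD))
  unfold smoothA scaledDrift
  fun_prop

end Differentiability

/-! ### Uniform small-time estimates -/

/-- The filter `s → 0+`, uniformly in `‖z‖ ≤ R`. -/
def smallTimeFilter (R : ℝ) : Filter (ℝ × ℂ) := 𝓝[>] 0 ×ˢ 𝓟 (Metric.closedBall 0 R)

lemma eventually_smallTimeFilter {R : ℝ} {P : ℝ × ℂ → Prop} :
    (∀ᶠ p in smallTimeFilter R, P p) ↔ ∀ᶠ s in 𝓝[>] (0 : ℝ), ∀ z : ℂ, ‖z‖ ≤ R → P (s, z) := by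
  simp only [smallTimeFilter, eventually_prod_principal_iff, mem_closedBall_zero_iff]

section SmallTime

variable (κ θ ρ ξ R : ℝ)

lemma smallTimeFilter_snd_isBigO :
    (fun p : ℝ × ℂ => p.2) =O[smallTimeFilter R] fun _ => (1 : ℂ) :=
  .of_bound R (eventually_smallTimeFilter.mpr (.of_forall fun s z hz => by simpa using hz))

lemma smallTimeFilter_fst_tendsto :
    Tendsto (fun p : ℝ × ℂ => (p.1 : ℂ)) (smallTimeFilter R) (𝓝 0) := by
  have hfst : Tendsto (fun p : ℝ × ℂ => p.1) (smallTimeFilter R) (𝓝 0) :=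
    tendsto_fst.mono_right nhdsWithin_le_nhds
  exact_mod_cast (Complex.continuous_ofReal.tendsto 0).comp hfst

lemma smallTimeFilter_fst_isBigO :
    (fun p : ℝ × ℂ => (p.1 : ℂ)) =O[smallTimeFilter R] fun _ => (1 : ℂ) :=
  (smallTimeFilter_fst_tendsto R).isBigO_one ℂ

lemma scaledDrift_isBigO :
    (fun p : ℝ × ℂ => scaledDrift κ ρ ξ p.1 p.2) =O[smallTimeFilter R] fun _ => (1 : ℂ) :=
  ((smallTimeFilter_fst_isBigO R).const_mul_left _).sub
    ((smallTimeFilter_snd_isBigO R).const_mul_left _)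

lemma halfPhaseSq_isBigO :
    (fun p : ℝ × ℂ => halfPhaseSq κ ρ ξ p.1 p.2) =O[smallTimeFilter R] fun p => (p.1 : ℂ) := by
  have hs := smallTimeFilter_fst_isBigO R
  have hz := smallTimeFilter_snd_isBigO R
  have hdisc := ((scaledDrift_isBigO κ ρ ξ R).pow 2).add
    (((hz.mul (hs.sub hz)).const_mul_left ((ξ : ℂ) ^ 2)).trans (by simp [isBigO_refl]))
  have h := (((isBigO_refl (fun p : ℝ × ℂ => (p.1 : ℂ)) _).mul hs).mul hdisc).const_mul_left
    (1 / 4 : ℂ)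
  simp only [one_pow, mul_one] at h
  exact h.congr_left fun p => by rw [halfPhaseSq]; ring

lemma halfPhaseSq_tendsto :
    Tendsto (fun p : ℝ × ℂ => halfPhaseSq κ ρ ξ p.1 p.2) (smallTimeFilter R) (𝓝 0) :=
  (halfPhaseSq_isBigO κ ρ ξ R).trans_tendsto (smallTimeFilter_fst_tendsto R)

lemma coshSqrt_halfPhaseSq_sub_one_isBigO :
    (fun p : ℝ × ℂ => coshSqrt (halfPhaseSq κ ρ ξ p.1 p.2) - 1) =O[smallTimeFilter R]
      fun p => (p.1 : ℂ) := by
  have h := (differentiable_coshSqrt 0).isBigO_sub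
  simp only [coshSqrt_zero, sub_zero] at h
  exact (h.comp_tendsto (halfPhaseSq_tendsto κ ρ ξ R)).trans (halfPhaseSq_isBigO κ ρ ξ R)

lemma sinhcSqrt_halfPhaseSq_sub_one_isBigO :
    (fun p : ℝ × ℂ => sinhcSqrt (halfPhaseSq κ ρ ξ p.1 p.2) - 1) =O[smallTimeFilter R]
      fun p => (p.1 : ℂ) := by
  have h := (differentiable_sinhcSqrt 0).isBigO_sub
  simp only [sinhcSqrt_zero, sub_zero] at h
  exact (h.comp_tendsto (halfPhaseSq_tendsto κ ρ ξ R)).trans (halfPhaseSq_isBigO κ ρ ξ R)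

lemma sinhcSqrt_halfPhaseSq_isBigO :
    (fun p : ℝ × ℂ => sinhcSqrt (halfPhaseSq κ ρ ξ p.1 p.2)) =O[smallTimeFilter R]
      fun _ => (1 : ℂ) :=
  (differentiable_sinhcSqrt.continuous.tendsto 0 |>.comp (halfPhaseSq_tendsto κ ρ ξ R)).isBigO_one ℂ

lemma smoothDenom_sub_one_isBigO :
    (fun p : ℝ × ℂ => smoothDenom κ ρ ξ p.1 p.2 - 1) =O[smallTimeFilter R]
      fun p => (p.1 : ℂ) := by
  have hsinh := (((isBigO_refl (fun p : ℝ × ℂ => (p.1 : ℂ)) _).mul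
    (scaledDrift_isBigO κ ρ ξ R)).mul
      (sinhcSqrt_halfPhaseSq_isBigO κ ρ ξ R)).const_mul_left (1 / 2 : ℂ)
  simp only [mul_one] at hsinh
  exact ((coshSqrt_halfPhaseSq_sub_one_isBigO κ ρ ξ R).add hsinh).congr_left fun p => by
    rw [smoothDenom]; ring

lemma smoothDenom_tendsto :
    Tendsto (fun p : ℝ × ℂ => smoothDenom κ ρ ξ p.1 p.2) (smallTimeFilter R) (𝓝 1) := by
  simpa using ((smoothDenom_sub_one_isBigO κ ρ ξ R).trans_tendsto
    (smallTimeFilter_fst_tendsto R)).add_const 1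

lemma smoothB_sub_isBigO :
    (fun p : ℝ × ℂ => smoothB κ ρ ξ p.1 p.2 - p.2 ^ 2 / 2) =O[smallTimeFilter R]
      fun p => (p.1 : ℂ) := by
  have hz := smallTimeFilter_snd_isBigO R
  have hD := smoothDenom_tendsto κ ρ ξ R
  have hquad := (hz.pow 2).mul ((sinhcSqrt_halfPhaseSq_sub_one_isBigO κ ρ ξ R).sub
    (smoothDenom_sub_one_isBigO κ ρ ξ R))
  have hlin := (hz.mul (sinhcSqrt_halfPhaseSq_isBigO κ ρ ξ R)).mul
    (isBigO_refl (fun p : ℝ × ℂ => (p.1 : ℂ)) _)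
  simp only [one_pow, one_mul] at hquad hlin
  have h := ((hquad.sub hlin).mul ((hD.inv₀ one_ne_zero).isBigO_one ℂ)).const_mul_left (1 / 2 : ℂ)
  simp only [mul_one] at h
  refine h.congr' ?_ .rfl
  filter_upwards [hD.eventually_ne one_ne_zero] with p hp
  rw [smoothB]
  field_simp
  ring

lemma smoothA_isBigO :
    (fun p : ℝ × ℂ => smoothA κ θ ρ ξ p.1 p.2) =O[smallTimeFilter R] fun p => (p.1 : ℂ) := by
  have hdrift := (isBigO_refl (fun p : ℝ × ℂ => (p.1 : ℂ)) _).mul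
    (scaledDrift_isBigO κ ρ ξ R)
  have hlog := (differentiableAt_id.clog (x := (1 : ℂ)) (by simp)).isBigO_sub
  simp only [id, Complex.log_one, sub_zero] at hlog
  simp only [mul_one] at hdrift
  exact (hdrift.sub (((hlog.comp_tendsto (smoothDenom_tendsto κ ρ ξ R)).trans
    (smoothDenom_sub_one_isBigO κ ρ ξ R)).const_mul_left 2)).const_mul_left _

end SmallTime

lemma norm_deriv_le_of_forall_mem_closedBall {f : ℂ → ℂ} {z : ℂ} {M : ℝ}
    (hf : ∀ y ∈ Metric.closedBall z 1, DifferentiableAt ℂ f y)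
    (hM : ∀ y ∈ Metric.closedBall z 1, ‖f y‖ ≤ M) : ‖deriv f z‖ ≤ M := by
  have hcont : DiffContOnCl ℂ f (Metric.ball z 1) := by
    refine DifferentiableOn.diffContOnCl fun y hy => (hf y ?_).differentiableWithinAt
    rwa [closure_ball z one_ne_zero] at hy
  simpa using Complex.norm_deriv_le_of_forall_mem_sphere_norm_le one_pos hcont
    fun y hy => hM y (Metric.sphere_subset_closedBall hy)

lemma norm_image_sub_sub_deriv_mul_le {f f' : ℂ → ℂ} {S : Set ℂ} {z w : ℂ} {M : ℝ}
    (hS : Convex ℝ S) (hf : ∀ y ∈ S, HasDerivAt f (f' y) y) (hM : ∀ y ∈ S, ‖f' y‖ ≤ M)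
    (hz : z ∈ S) (hw : w ∈ S) : ‖f w - f z - f' z * (w - z)‖ ≤ 2 * M * ‖w - z‖ := by
  have hincr : ‖f w - f z‖ ≤ M * ‖w - z‖ :=
    hS.norm_image_sub_le_of_norm_hasDerivWithin_le (fun y hy => (hf y hy).hasDerivWithinAt)
      hM hz hw
  have hlin : ‖f' z * (w - z)‖ ≤ M * ‖w - z‖ := by
    rw [norm_mul]
    exact mul_le_mul_of_nonneg_right (hM z hz) (norm_nonneg _)
  calc ‖f w - f z - f' z * (w - z)‖ ≤ ‖f w - f z‖ + ‖f' z * (w - z)‖ := norm_sub_le _ _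
    _ ≤ 2 * M * ‖w - z‖ := by linarith

/-- The values of `A` and `B` at time `s²` are `O(s)`-close to `0` and `z²/2` on the disc
`‖z‖ ≤ R`, with constant `C`, and the identification with the branch-free forms applies there. -/
structure SmallTimeBounds (κ θ ρ ξ C R s : ℝ) : Prop where
  pos : 0 < s
  phase_lt : ∀ z : ℂ, ‖z‖ ≤ R → ‖halfPhaseSq κ ρ ξ s z‖ < 1
  denom_pos : ∀ z : ℂ, ‖z‖ ≤ R → 0 < (smoothDenom κ ρ ξ s z).re
  smoothB_le : ∀ z : ℂ, ‖z‖ ≤ R → ‖smoothB κ ρ ξ s z - z ^ 2 / 2‖ ≤ C * s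
  smoothA_le : ∀ z : ℂ, ‖z‖ ≤ R → ‖smoothA κ θ ρ ξ s z‖ ≤ C * s

namespace SmallTimeBounds

variable {κ θ ρ ξ C R s : ℝ} {z : ℂ}

lemma differentiableAt_smoothB (h : SmallTimeBounds κ θ ρ ξ C R s) (hz : ‖z‖ ≤ R) :
    DifferentiableAt ℂ (smoothB κ ρ ξ s) z :=
  _root_.differentiableAt_smoothB fun h0 => by simpa [h0] using h.denom_pos z hz

lemma differentiableAt_smoothA (h : SmallTimeBounds κ θ ρ ξ C R s) (hz : ‖z‖ ≤ R) :
    DifferentiableAt ℂ (smoothA κ θ ρ ξ s) z :=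
  _root_.differentiableAt_smoothA (h.denom_pos z hz)

lemma norm_le_of_mem_closedBall {y : ℂ} (hz : ‖z‖ + 1 ≤ R) (hy : y ∈ Metric.closedBall z 1) :
    ‖y‖ ≤ R := by
  have := norm_le_norm_add_norm_sub z y
  rw [mem_closedBall_iff_norm'] at hy
  linarith

lemma hasDerivAt_smoothB_sub (h : SmallTimeBounds κ θ ρ ξ C R s) (hz : ‖z‖ ≤ R) :
    HasDerivAt (fun y => smoothB κ ρ ξ s y - y ^ 2 / 2) (deriv (smoothB κ ρ ξ s) z - z) z :=
  ((h.differentiableAt_smoothB hz).hasDerivAt.sub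
    (((hasDerivAt_id z).pow 2).div_const 2)).congr_deriv (by simp)

lemma deriv_smoothB_le (h : SmallTimeBounds κ θ ρ ξ C R s) (hz : ‖z‖ + 1 ≤ R) :
    ‖deriv (smoothB κ ρ ξ s) z - z‖ ≤ C * s := by
  rw [← (h.hasDerivAt_smoothB_sub (by linarith)).deriv]
  exact norm_deriv_le_of_forall_mem_closedBall
    (fun y hy => (h.hasDerivAt_smoothB_sub (norm_le_of_mem_closedBall hz hy)).differentiableAt)
    fun y hy => h.smoothB_le y (norm_le_of_mem_closedBall hz hy)

lemma deriv_smoothA_le (h : SmallTimeBounds κ θ ρ ξ C R s) (hz : ‖z‖ + 1 ≤ R) :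
    ‖deriv (smoothA κ θ ρ ξ s) z‖ ≤ C * s :=
  norm_deriv_le_of_forall_mem_closedBall
    (fun _ hy => h.differentiableAt_smoothA (norm_le_of_mem_closedBall hz hy))
    fun y hy => h.smoothA_le y (norm_le_of_mem_closedBall hz hy)

lemma mem_closedBall_sub_one (hz : ‖z‖ + 1 ≤ R) :
    z ∈ Metric.closedBall (0 : ℂ) (R - 1) := by
  rw [mem_closedBall_zero_iff]
  linarith

lemma smoothB_taylor_le {h : ℂ} (hs : SmallTimeBounds κ θ ρ ξ C R s) (hz : ‖z‖ + 1 ≤ R)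
    (hzh : ‖z + h‖ + 1 ≤ R) :
    ‖smoothB κ ρ ξ s (z + h) - smoothB κ ρ ξ s z - deriv (smoothB κ ρ ξ s) z * h - h ^ 2 / 2‖ ≤
      2 * (C * s) * ‖h‖ := by
  have htaylor := norm_image_sub_sub_deriv_mul_le (convex_closedBall (0 : ℂ) (R - 1))
    (fun y hy => hs.hasDerivAt_smoothB_sub (by rw [mem_closedBall_zero_iff] at hy; linarith))
    (fun y hy => hs.deriv_smoothB_le (by rw [mem_closedBall_zero_iff] at hy; linarith))
    (mem_closedBall_sub_one hz) (mem_closedBall_sub_one hzh)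
  rw [add_sub_cancel_left] at htaylor
  convert htaylor using 2
  ring

lemma smoothA_taylor_le {h : ℂ} (hs : SmallTimeBounds κ θ ρ ξ C R s) (hz : ‖z‖ + 1 ≤ R)
    (hzh : ‖z + h‖ + 1 ≤ R) :
    ‖smoothA κ θ ρ ξ s (z + h) - smoothA κ θ ρ ξ s z - deriv (smoothA κ θ ρ ξ s) z * h‖ ≤
      2 * (C * s) * ‖h‖ := by
  have htaylor := norm_image_sub_sub_deriv_mul_le (convex_closedBall (0 : ℂ) (R - 1))
    (fun y hy => (hs.differentiableAt_smoothA
      (by rw [mem_closedBall_zero_iff] at hy; linarith)).hasDerivAt)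
    (fun y hy => hs.deriv_smoothA_le (by rw [mem_closedBall_zero_iff] at hy; linarith))
    (mem_closedBall_sub_one hz) (mem_closedBall_sub_one hzh)
  rwa [add_sub_cancel_left] at htaylor

end SmallTimeBounds

lemma exists_eventually_smallTimeBounds (κ θ ρ ξ R : ℝ) :
    ∃ C, ∀ᶠ s in 𝓝[>] (0 : ℝ), SmallTimeBounds κ θ ρ ξ C R s := by
  obtain ⟨CB, hB⟩ := (smoothB_sub_isBigO κ ρ ξ R).bound
  obtain ⟨CA, hA⟩ := (smoothA_isBigO κ θ ρ ξ R).bound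
  have hphase : ∀ᶠ p in smallTimeFilter R, ‖halfPhaseSq κ ρ ξ p.1 p.2‖ < 1 :=
    (halfPhaseSq_tendsto κ ρ ξ R).norm.eventually_lt_const (by simp)
  have hdenom : ∀ᶠ p in smallTimeFilter R, 0 < (smoothDenom κ ρ ξ p.1 p.2).re :=
    ((Complex.continuous_re.tendsto _).comp (smoothDenom_tendsto κ ρ ξ R)).eventually_const_lt
      (by simp)
  rw [eventually_smallTimeFilter] at hB hA hphase hdenom
  refine ⟨max CB CA, ?_⟩
  filter_upwards [hB, hA, hphase, hdenom, self_mem_nhdsWithin] with s hBs hAs hphases hdenoms hs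
  have hs0 : 0 ≤ s := le_of_lt hs
  simp only [Complex.norm_real, Real.norm_of_nonneg hs0] at hBs hAs
  exact ⟨hs, hphases, hdenoms,
    fun z hz => (hBs z hz).trans (mul_le_mul_of_nonneg_right (le_max_left _ _) hs0),
    fun z hz => (hAs z hz).trans (mul_le_mul_of_nonneg_right (le_max_right _ _) hs0)⟩

/-! ### Second-order expansions -/

/-- `f = a + b X + c X² + O(X³)` along `l`, for a small quantity `X`. -/
def HasSecondOrderExpansion {ι 𝕜 : Type*} [NormedField 𝕜] (l : Filter ι) (X f : ι → 𝕜)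
    (a b c : 𝕜) : Prop :=
  (fun i => f i - (a + b * X i + c * X i ^ 2)) =O[l] fun i => X i ^ 3

lemma isBigO_pow_of_tendsto_zero {ι 𝕜 : Type*} [NormedField 𝕜] {l : Filter ι} {X : ι → 𝕜}
    (hX : Tendsto X l (𝓝 0)) {m n : ℕ} (h : n ≤ m) :
    (fun i => X i ^ m) =O[l] fun i => X i ^ n := by
  rcases h.eq_or_lt with rfl | hlt
  · exact isBigO_refl _ _
  · exact ((isLittleO_pow_pow hlt).comp_tendsto hX).isBigO

namespace HasSecondOrderExpansion

section NormedField

variable {ι 𝕜 : Type*} [NormedField 𝕜] {l : Filter ι} {X f g : ι → 𝕜} {a b c a' b' c' : 𝕜}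

lemma of_isBigO (h : f =O[l] fun i => X i ^ 3) : HasSecondOrderExpansion l X f 0 0 0 := by
  simpa [HasSecondOrderExpansion] using h

lemma polynomial (a b c : 𝕜) :
    HasSecondOrderExpansion l X (fun i => a + b * X i + c * X i ^ 2) a b c := by
  simpa [HasSecondOrderExpansion] using isBigO_zero _ _

lemma const (a : 𝕜) : HasSecondOrderExpansion l X (fun _ => a) a 0 0 := by
  simpa using polynomial (l := l) (X := X) a 0 0

lemma tendsto (hX : Tendsto X l (𝓝 0)) (h : HasSecondOrderExpansion l X f a b c) :
    Tendsto f l (𝓝 a) := by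
  have hrem := IsBigO.trans_tendsto h (by simpa using hX.pow 3)
  have hpoly := (hX.const_mul b).const_add a |>.add ((hX.pow 2).const_mul c)
  simpa using hrem.add hpoly

lemma isBigO_one (hX : Tendsto X l (𝓝 0)) (h : HasSecondOrderExpansion l X f a b c) :
    f =O[l] fun _ => (1 : 𝕜) :=
  (h.tendsto hX).isBigO_one 𝕜

lemma congr' (h : HasSecondOrderExpansion l X f a b c) (hfg : f =ᶠ[l] g) (ha : a = a')
    (hb : b = b') (hc : c = c') : HasSecondOrderExpansion l X g a' b' c' := by
  subst ha hb hc
  exact IsBigO.congr' h (hfg.mono fun i hi => by simp only [hi]) .rfl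

lemma add (hf : HasSecondOrderExpansion l X f a b c)
    (hg : HasSecondOrderExpansion l X g a' b' c') :
    HasSecondOrderExpansion l X (fun i => f i + g i) (a + a') (b + b') (c + c') :=
  (IsBigO.add hf hg).congr_left fun i => by ring

lemma mul (hX : Tendsto X l (𝓝 0)) (hf : HasSecondOrderExpansion l X f a b c)
    (hg : HasSecondOrderExpansion l X g a' b' c') :
    HasSecondOrderExpansion l X (fun i => f i * g i)
      (a * a') (a * b' + b * a') (a * c' + b * b' + c * a') := by
  have hleft := IsBigO.mul hf (hg.isBigO_one hX)
  have hright := ((polynomial a b c).isBigO_one hX).mul hg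
  have hcross := (isBigO_refl (fun i => X i ^ 3) l).mul
    ((polynomial (b * c' + c * b') (c * c') 0).isBigO_one hX)
  simp only [mul_one, one_mul] at hleft hright hcross
  exact ((hleft.add hright).add hcross).congr_left fun i => by ring

lemma const_mul (hX : Tendsto X l (𝓝 0)) (r : 𝕜) (h : HasSecondOrderExpansion l X f a b c) :
    HasSecondOrderExpansion l X (fun i => r * f i) (r * a) (r * b) (r * c) := by
  simpa using (const r).mul hX h

lemma self_mul (hX : Tendsto X l (𝓝 0)) (h : HasSecondOrderExpansion l X f a b c) :
    HasSecondOrderExpansion l X (fun i => X i * f i) 0 a b :=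
  ((polynomial 0 1 0).mul hX h).congr' (.of_eq (by ext; ring)) (by ring) (by ring) (by ring)

lemma inv (hX : Tendsto X l (𝓝 0)) (h : HasSecondOrderExpansion l X f a b c) (ha : a ≠ 0) :
    HasSecondOrderExpansion l X (fun i => (f i)⁻¹)
      a⁻¹ (-b / a ^ 2) (b ^ 2 / a ^ 3 - c / a ^ 2) := by
  have hmul := (const 1).add ((h.mul hX (polynomial a⁻¹ (-b / a ^ 2)
    (b ^ 2 / a ^ 3 - c / a ^ 2))).const_mul hX (-1))
  have hdefect := hmul.congr' (a' := 0) (b' := 0) (c' := 0) .rfl (by field_simp; ring)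
    (by field_simp; ring) (by field_simp; ring)
  refine (((h.tendsto hX).inv₀ ha).isBigO_one 𝕜 |>.mul hdefect).congr' ?_ (.of_eq (by simp))
  filter_upwards [(h.tendsto hX).eventually_ne ha] with i hi
  field_simp
  ring

end NormedField

variable {ι : Type*} {l : Filter ι} {X f : ι → ℂ} {a b c : ℂ}

lemma cexp (hX : Tendsto X l (𝓝 0)) (h : HasSecondOrderExpansion l X f a b c) :
    HasSecondOrderExpansion l X (fun i => Complex.exp (f i)) (Complex.exp a)
      (Complex.exp a * b) (Complex.exp a * (c + b ^ 2 / 2)) := by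
  have hdiff := (h.add (const (-a))).congr' (a' := 0) .rfl (by ring) rfl rfl
  have hdiffX : (fun i => f i + -a) =O[l] X := by
    have hsq := isBigO_pow_of_tendsto_zero hX one_le_two
    have hcube := IsBigO.trans hdiff (isBigO_pow_of_tendsto_zero hX (by norm_num : 1 ≤ 3))
    simp only [pow_one] at hsq hcube
    exact (hcube.add (((isBigO_refl X l).const_mul_left (b + 0)).add
      (hsq.const_mul_left (c + 0)))).congr_left fun i => by ring
  have htaylor := ((Complex.exp_sub_sum_range_isBigO_pow 3).comp_tendsto
    (hdiff.tendsto hX)).trans (hdiffX.pow 3)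
  have hexp := (((of_isBigO htaylor).add (const 1)).add hdiff).add
    ((hdiff.mul hX hdiff).const_mul hX (1 / 2))
  refine (hexp.const_mul hX (Complex.exp a)).congr' (.of_eq ?_) (by ring) (by ring) (by ring)
  ext i
  have hsplit : Complex.exp (f i) = Complex.exp a * Complex.exp (f i + -a) := by
    rw [← Complex.exp_add]; ring_nf
  rw [hsplit]
  simp only [Function.comp_apply, Finset.sum_range_succ, Finset.sum_range_zero, Nat.factorial]
  push_cast
  ring

lemma clog_one_sub_add (hX : Tendsto X l (𝓝 0)) (h : HasSecondOrderExpansion l X f a b c) :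
    HasSecondOrderExpansion l X (fun i => Complex.log (1 - X i * f i) + X i * f i)
      0 0 (-a ^ 2 / 2) := by
  have hXf := h.self_mul hX
  have hneg : Tendsto (fun i => -(X i * f i)) l (𝓝 0) := by simpa using (hXf.tendsto hX).neg
  have hcube : (fun i => (-(X i * f i)) ^ 3) =O[l] fun i => X i ^ 3 := by
    simpa using (((isBigO_refl X l).mul (h.isBigO_one hX)).neg_left).pow 3
  have htaylor := ((Complex.log_sub_logTaylor_isBigO 2).comp_tendsto hneg).trans hcube
  refine ((of_isBigO htaylor).add ((hXf.mul hX hXf).const_mul hX (-1 / 2))).congr'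
    (.of_eq ?_) (by ring) (by ring) (by ring)
  ext i
  simp only [Function.comp_apply, Complex.logTaylor_succ, Complex.logTaylor_zero, Pi.add_apply]
  push_cast
  ring_nf

lemma ofReal {ι : Type*} {l : Filter ι} {x f : ι → ℝ} {a b c : ℝ}
    (h : HasSecondOrderExpansion l x f a b c) :
    HasSecondOrderExpansion l (fun i => (x i : ℂ)) (fun i => (f i : ℂ)) a b c :=
  .of_norm_norm <| h.norm_norm.congr
    (fun i => by rw [← Complex.norm_real]; push_cast; rfl)
    (fun i => by rw [← Complex.norm_real]; push_cast; rfl)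

end HasSecondOrderExpansion

/-! ### The rescaled saddle equation -/

lemma isBigO_sub_of_sq_sub_sq {ι : Type*} {l : Filter ι} {f g r : ι → ℝ} {c : ℝ} (hc : 0 < c)
    (hsq : (fun i => f i ^ 2 - g i ^ 2) =O[l] r) (hsum : ∀ᶠ i in l, c ≤ |f i + g i|) :
    (fun i => f i - g i) =O[l] r := by
  refine IsBigO.trans (IsBigO.of_bound c⁻¹ ?_) hsq
  filter_upwards [hsum] with i hi
  rw [sq_sub_sq, norm_mul, Real.norm_eq_abs (f i + g i), ← mul_assoc]
  refine le_mul_of_one_le_left (norm_nonneg _) ?_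
  rwa [← div_eq_inv_mul, one_le_div hc]

/-- The saddle-point equation in the variables used for its expansion: `x = τ^(1/8)`, the value
`b` of `B'` and the value `e` of `1 - 2βB` at the saddle point, and the derivative `d` of `A`
there. The factor `x⁴` forces `e` to be of order `x²`. -/
structure RescaledSaddle {ι : Type*} (l : Filter ι) (x b e d : ι → ℝ) (β V α k : ℝ) : Prop where
  tendsto_zero : Tendsto x l (𝓝 0)
  pos : ∀ᶠ i in l, 0 < x i
  gap_pos : ∀ᶠ i in l, 0 < e i
  isBigO_one : b =O[l] fun _ => (1 : ℝ)
  gap_sub_isBigO : (fun i => e i - (1 - β * b i ^ 2)) =O[l] fun i => x i ^ 4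
  drift_isBigO : d =O[l] fun i => x i ^ 4
  equation : ∀ᶠ i in l, x i ^ 4 * (d i + V * b i / e i ^ 2 + 2 * α * β * b i / e i) = k

namespace RescaledSaddle

variable {ι : Type*} {l : Filter ι} {x b e d : ι → ℝ} {β V α k a₀ e₀ : ℝ}

lemma gap_isBigO_one (h : RescaledSaddle l x b e d β V α k) : e =O[l] fun _ => (1 : ℝ) := by
  have hx : (fun i => x i ^ 4) =O[l] fun _ => (1 : ℝ) := by
    simpa using isBigO_pow_of_tendsto_zero h.tendsto_zero (Nat.zero_le 4)
  have hb : (fun i => b i ^ 2) =O[l] fun _ => (1 : ℝ) := by simpa using h.isBigO_one.pow 2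
  exact ((h.gap_sub_isBigO.trans hx).add ((isBigO_const_one ℝ (1 : ℝ) l).sub
    (hb.const_mul_left β))).congr_left fun i => by ring

lemma drift_mul_sq_isBigO (h : RescaledSaddle l x b e d β V α k) :
    (fun i => d i * e i ^ 2) =O[l] fun i => x i ^ 4 := by
  simpa using h.drift_isBigO.mul (h.gap_isBigO_one.pow 2)

lemma scaled_equation (h : RescaledSaddle l x b e d β V α k) :
    ∀ᶠ i in l, k * (e i / x i ^ 2) ^ 2 = d i * e i ^ 2 + V * b i + 2 * α * β * (b i * e i) := by
  filter_upwards [h.equation, h.gap_pos, h.pos] with i heq he hx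
  rw [← heq]
  field_simp

lemma scaledGap_isBigO_one (h : RescaledSaddle l x b e d β V α k) (hk : k ≠ 0) :
    (fun i => e i / x i ^ 2) =O[l] fun _ => (1 : ℝ) := by
  have hx : (fun i => x i ^ 4) =O[l] fun _ => (1 : ℝ) := by
    simpa using isBigO_pow_of_tendsto_zero h.tendsto_zero (Nat.zero_le 4)
  have hbe : (fun i => b i * e i) =O[l] fun _ => (1 : ℝ) := by
    simpa using h.isBigO_one.mul h.gap_isBigO_one
  have hright := ((h.drift_mul_sq_isBigO.trans hx).add (h.isBigO_one.const_mul_left V)).add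
    (hbe.const_mul_left (2 * α * β))
  have hsq : ((fun i => e i / x i ^ 2) ^ 2) =O[l] ((fun _ => (1 : ℝ)) ^ 2) := by
    refine (hright.const_mul_left k⁻¹).congr' ?_ (.of_eq (by ext; simp))
    filter_upwards [h.scaled_equation] with i hi
    rw [← hi, inv_mul_cancel_left₀ hk, Pi.pow_apply]
  exact hsq.of_pow two_ne_zero

lemma gap_isBigO_sq (h : RescaledSaddle l x b e d β V α k) (hk : k ≠ 0) :
    e =O[l] fun i => x i ^ 2 := by
  refine ((isBigO_refl (fun i => x i ^ 2) l).mul (h.scaledGap_isBigO_one hk)).congr' ?_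
    (.of_eq (by ext; simp))
  filter_upwards [h.pos] with i hi
  field_simp

lemma pow_four_isBigO_sq (h : RescaledSaddle l x b e d β V α k) :
    (fun i => x i ^ 4) =O[l] fun i => x i ^ 2 :=
  isBigO_pow_of_tendsto_zero h.tendsto_zero (by norm_num)

lemma tendsto_gap (h : RescaledSaddle l x b e d β V α k) (hk : k ≠ 0) : Tendsto e l (𝓝 0) :=
  (h.gap_isBigO_sq hk).trans_tendsto (by simpa using h.tendsto_zero.pow 2)

lemma sq_sub_isBigO (h : RescaledSaddle l x b e d β V α k) (ha : β * a₀ ^ 2 = 1) :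
    (fun i => b i ^ 2 - a₀ ^ 2 + a₀ ^ 2 * e i) =O[l] fun i => x i ^ 4 :=
  (h.gap_sub_isBigO.const_mul_left (a₀ ^ 2)).congr_left fun i => by
    linear_combination b i ^ 2 * ha

-- The left side of the equation has the sign of `k`, hence so does `b` up to `o(1)`.
lemma eventually_le_abs_add (h : RescaledSaddle l x b e d β V α k) (hV : 0 < V)
    (hak : 0 < a₀ * k) : ∀ᶠ i in l, |a₀| / 2 ≤ |b i + a₀| := by
  have ha₀ : a₀ ≠ 0 := left_ne_zero_of_mul hak.ne'
  have hk : k ≠ 0 := right_ne_zero_of_mul hak.ne'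
  have hdrift : Tendsto (fun i => d i * e i ^ 2) l (𝓝 0) :=
    h.drift_mul_sq_isBigO.trans_tendsto (by simpa using h.tendsto_zero.pow 4)
  have hprod : Tendsto (fun i => b i * e i) l (𝓝 0) :=
    (h.isBigO_one.mul (isBigO_refl e l)).trans_tendsto (by simpa using h.tendsto_gap hk)
  have hsmall : Tendsto (fun i => a₀ * (d i * e i ^ 2 + 2 * α * β * (b i * e i))) l (𝓝 0) := by
    simpa using (hdrift.add (hprod.const_mul (2 * α * β))).const_mul a₀
  filter_upwards [hsmall.eventually_lt_const (show 0 < V * a₀ ^ 2 / 2 by positivity),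
    h.scaled_equation] with i hi heq
  have hleft : 0 ≤ a₀ * k * (e i / x i ^ 2) ^ 2 := by positivity
  have hVb : 0 < V * (a₀ * (b i + a₀) - a₀ ^ 2 / 2) := by
    linear_combination hi + hleft + a₀ * heq
  have hprod_lt : |a₀| ^ 2 / 2 < |a₀| * |b i + a₀| := by
    rw [sq_abs, ← abs_mul]
    linarith [pos_of_mul_pos_right hVb hV.le, le_abs_self (a₀ * (b i + a₀))]
  refine le_of_mul_le_mul_left ?_ (abs_pos.mpr ha₀)
  linarith

lemma sub_isBigO (h : RescaledSaddle l x b e d β V α k) (hV : 0 < V) (ha : β * a₀ ^ 2 = 1)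
    (hak : 0 < a₀ * k) : (fun i => b i - a₀) =O[l] fun i => x i ^ 2 := by
  have ha₀ : a₀ ≠ 0 := left_ne_zero_of_mul hak.ne'
  have hk : k ≠ 0 := right_ne_zero_of_mul hak.ne'
  have hsq := ((h.sq_sub_isBigO ha).trans h.pow_four_isBigO_sq).sub
    ((h.gap_isBigO_sq hk).const_mul_left (a₀ ^ 2))
  exact isBigO_sub_of_sq_sub_sq (g := fun _ => a₀) (half_pos (abs_pos.mpr ha₀))
    (hsq.congr_left fun i => by ring) (h.eventually_le_abs_add hV hak)

lemma sub_gap_isBigO (h : RescaledSaddle l x b e d β V α k) (hV : 0 < V) (ha : β * a₀ ^ 2 = 1)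
    (hak : 0 < a₀ * k) :
    (fun i => b i - (a₀ - a₀ / 2 * e i)) =O[l] fun i => x i ^ 4 := by
  have ha₀ : a₀ ≠ 0 := left_ne_zero_of_mul hak.ne'
  have hsq : (fun i => (b i - a₀) ^ 2) =O[l] fun i => x i ^ 4 :=
    ((h.sub_isBigO hV ha hak).pow 2).congr_right fun i => by ring
  refine (((h.sq_sub_isBigO ha).sub hsq).const_mul_left (1 / (2 * a₀))).congr_left fun i => ?_
  field_simp
  ring

lemma scaledGap_sq_sub_isBigO (h : RescaledSaddle l x b e d β V α k) (hV : 0 < V)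
    (ha : β * a₀ ^ 2 = 1) (hak : 0 < a₀ * k) (he : k * e₀ ^ 2 = V * a₀) :
    (fun i => (e i / x i ^ 2) ^ 2 - e₀ ^ 2 - a₀ * (2 * α * β - V / 2) / k * e i) =O[l]
      fun i => x i ^ 4 := by
  have hk : k ≠ 0 := right_ne_zero_of_mul hak.ne'
  have hprod : (fun i => (b i - a₀) * e i) =O[l] fun i => x i ^ 4 :=
    ((h.sub_isBigO hV ha hak).mul (h.gap_isBigO_sq hk)).congr_right fun i => by ring
  refine (((h.drift_mul_sq_isBigO.add ((h.sub_gap_isBigO hV ha hak).const_mul_left V)).add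
    (hprod.const_mul_left (2 * α * β))).const_mul_left k⁻¹).congr' ?_ .rfl
  filter_upwards [h.scaled_equation] with i hi
  have hcancel : k * (a₀ * (2 * α * β - V / 2) / k) = a₀ * (2 * α * β - V / 2) :=
    mul_div_cancel₀ _ hk
  rw [inv_mul_eq_iff_eq_mul₀ hk]
  linear_combination he - hi + e i * hcancel

lemma scaledGap_sub_isBigO (h : RescaledSaddle l x b e d β V α k) (hV : 0 < V)
    (ha : β * a₀ ^ 2 = 1) (hak : 0 < a₀ * k) (he₀ : 0 < e₀) (he : k * e₀ ^ 2 = V * a₀) :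
    (fun i => e i / x i ^ 2 - e₀) =O[l] fun i => x i ^ 2 := by
  have hk : k ≠ 0 := right_ne_zero_of_mul hak.ne'
  have hsq := ((h.scaledGap_sq_sub_isBigO hV ha hak he).trans h.pow_four_isBigO_sq).add
    ((h.gap_isBigO_sq hk).const_mul_left (a₀ * (2 * α * β - V / 2) / k))
  refine isBigO_sub_of_sq_sub_sq (g := fun _ => e₀) he₀ (hsq.congr_left fun i => by ring) ?_
  filter_upwards [h.gap_pos] with i hi
  exact (le_add_of_nonneg_left (by positivity)).trans (le_abs_self _)

lemma gap_sub_sq_isBigO (h : RescaledSaddle l x b e d β V α k) (hV : 0 < V)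
    (ha : β * a₀ ^ 2 = 1) (hak : 0 < a₀ * k) (he₀ : 0 < e₀) (he : k * e₀ ^ 2 = V * a₀) :
    (fun i => e i - e₀ * x i ^ 2) =O[l] fun i => x i ^ 4 := by
  refine ((isBigO_refl (fun i => x i ^ 2) l).mul
    (h.scaledGap_sub_isBigO hV ha hak he₀ he)).congr' ?_ (.of_eq (by ext; ring))
  filter_upwards [h.pos] with i hi
  field_simp

theorem expansion (h : RescaledSaddle l x b e d β V α k) (hV : 0 < V)
    (ha : β * a₀ ^ 2 = 1) (hak : 0 < a₀ * k) (he₀ : 0 < e₀) (he : k * e₀ ^ 2 = V * a₀) :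
    HasSecondOrderExpansion l x b a₀ 0 (-(a₀ * e₀ / 2)) := by
  have hfour := (h.sub_gap_isBigO hV ha hak).sub
    ((h.gap_sub_sq_isBigO hV ha hak he₀ he).const_mul_left (a₀ / 2))
  exact (hfour.congr_left fun i => by ring).trans
    (isBigO_pow_of_tendsto_zero h.tendsto_zero (by norm_num))

theorem scaledGap_expansion (h : RescaledSaddle l x b e d β V α k) (hV : 0 < V)
    (ha : β * a₀ ^ 2 = 1) (hak : 0 < a₀ * k) (he₀ : 0 < e₀) (he : k * e₀ ^ 2 = V * a₀) :
    HasSecondOrderExpansion l x (fun i => e i / x i ^ 2) e₀ 0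
      (a₀ * (2 * α * β - V / 2) / (2 * k)) := by
  have hk : k ≠ 0 := right_ne_zero_of_mul hak.ne'
  have hsq : (fun i => (e i / x i ^ 2 - e₀) ^ 2) =O[l] fun i => x i ^ 4 :=
    ((h.scaledGap_sub_isBigO hV ha hak he₀ he).pow 2).congr_right fun i => by ring
  have hfour := (((h.scaledGap_sq_sub_isBigO hV ha hak he).sub hsq).add
    ((h.gap_sub_sq_isBigO hV ha hak he₀ he).const_mul_left
      (a₀ * (2 * α * β - V / 2) / k))).const_mul_left (1 / (2 * e₀))
  refine (hfour.congr_left fun i => ?_).trans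
    (isBigO_pow_of_tendsto_zero h.tendsto_zero (by norm_num))
  field_simp
  ring

end RescaledSaddle

/-! ### The exponent of `Φ` -/

-- The remainder is computed exactly: only `η` enters it nonlinearly.
lemma cirLogMgf_add_sub {V α β e : ℝ} {b δ η : ℂ} (hβ : β ≠ 0) (he : 0 < e)
    (hb : 1 - 2 * β * b = e) (hη : η = 2 * β * δ / e) (hη1 : η ≠ 1) :
    cirLogMgf V α β (b + δ) - cirLogMgf V α β b =
      (V / e ^ 2 + 2 * α * β / e) * δ + V / (2 * β * e) * (η ^ 2 / (1 - η)) -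
        α * (Complex.log (1 - η) + η) := by
  have hec : (e : ℂ) ≠ 0 := by exact_mod_cast he.ne'
  have hβc : (β : ℂ) ≠ 0 := by exact_mod_cast hβ
  have hη0 : 1 - η ≠ 0 := sub_ne_zero.mpr hη1.symm
  have hδ : δ = e * η / (2 * β) := by rw [hη]; field_simp
  have hb' : b = (1 - e) / (2 * β) := by field_simp; linear_combination -hb
  have hshift : 1 - 2 * β * (b + δ) = e * (1 - η) := by rw [hb', hδ]; field_simp; ring
  rw [cirLogMgf, cirLogMgf, hshift, hb, Complex.log_ofReal_mul he hη0, Complex.ofReal_log he.le,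
    hb', hδ]
  field_simp
  ring

namespace HasSecondOrderExpansion

variable {ι : Type*} {l : Filter ι} {X f g : ι → ℂ} {a a₂ c c₂ : ℂ}

lemma one_sub_self_mul (hX : Tendsto X l (𝓝 0)) (hf : HasSecondOrderExpansion l X f a 0 a₂) :
    HasSecondOrderExpansion l X (fun i => 1 - X i * f i) 1 (-a) 0 :=
  ((const 1).add ((hf.self_mul hX).const_mul hX (-1))).congr' (.of_eq (by ext; ring))
    (by ring) (by ring) (by ring)

lemma sq_div_one_sub (hX : Tendsto X l (𝓝 0)) (hf : HasSecondOrderExpansion l X f a 0 a₂)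
    (hg : HasSecondOrderExpansion l X g c 0 c₂) (hc : c ≠ 0) :
    HasSecondOrderExpansion l X (fun i => f i ^ 2 / (g i * (1 - X i * f i)))
      (a ^ 2 / c) (a ^ 3 / c) (a ^ 4 / c + 2 * a * a₂ / c - a ^ 2 * c₂ / c ^ 2) := by
  refine (((hf.mul hX hf).mul hX (hg.inv hX hc)).mul hX
    ((hf.one_sub_self_mul hX).inv hX one_ne_zero)).congr' (.of_eq ?_) ?_ ?_ ?_
  · ext i
    rw [div_eq_mul_inv, mul_inv]
    ring
  all_goals field_simp
  all_goals ring

end HasSecondOrderExpansion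

section Exponent

variable {ι : Type*} {l : Filter ι} {X ε b d σ Q : ι → ℂ} {V α β a₀ e₀ e₁ u : ℂ}

lemma isBigO_one_of_add_const (hX : Tendsto X l (𝓝 0))
    (hσ : (fun i => σ i + u ^ 2 / 2) =O[l] X) : σ =O[l] fun _ => (1 : ℂ) :=
  ((hσ.trans (hX.isBigO_one ℂ)).sub (isBigO_const_one ℂ (u ^ 2 / 2) l)).congr_left
    fun i => by ring

lemma expansion_two_mul_div (hX : Tendsto X l (𝓝 0)) (he₀ : e₀ ≠ 0)
    (hb : HasSecondOrderExpansion l X b a₀ 0 (-(a₀ * e₀ / 2)))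
    (hε : HasSecondOrderExpansion l X ε e₀ 0 e₁) (hσ : σ =O[l] fun _ => (1 : ℂ)) :
    HasSecondOrderExpansion l X
      (fun i => 2 * β * (Complex.I * u * b i + X i ^ 3 * σ i) / ε i)
      (Complex.I * u * (2 * β * a₀ / e₀)) 0
      (-(Complex.I * u * (2 * β * a₀) * (1 / 2 + e₁ / e₀ ^ 2))) := by
  have hsmall : (fun i => X i ^ 3 * σ i) =O[l] fun i => X i ^ 3 := by
    simpa using (isBigO_refl (fun i => X i ^ 3) l).mul hσ
  refine ((((hb.const_mul hX (Complex.I * u)).add (.of_isBigO hsmall)).mul hX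
    (hε.inv hX he₀)).const_mul hX (2 * β)).congr' (.of_eq (by ext; ring)) ?_ ?_ ?_
  all_goals field_simp
  all_goals ring

lemma expansion_linear_terms (hX : Tendsto X l (𝓝 0)) (he₀ : e₀ ≠ 0)
    (hε : HasSecondOrderExpansion l X ε e₀ 0 e₁) (hσ : (fun i => σ i + u ^ 2 / 2) =O[l] X) :
    HasSecondOrderExpansion l X
      (fun i => (V / ε i ^ 2 * X i ^ 2 + 2 * α * β / ε i * X i ^ 4) * σ i)
      0 0 (-(V * u ^ 2 / (2 * e₀ ^ 2))) := by
  have hεinv := hε.inv hX he₀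
  have hsq : HasSecondOrderExpansion l X (fun i => X i ^ 2 * σ i) 0 0 (-(u ^ 2 / 2)) :=
    ((isBigO_refl (fun i => X i ^ 2) l).mul hσ).congr (fun i => by ring) fun i => by ring
  have hfour : (fun i => X i ^ 4 * σ i) =O[l] fun i => X i ^ 3 := by
    simpa using (isBigO_pow_of_tendsto_zero hX (by norm_num : 3 ≤ 4)).mul
      (isBigO_one_of_add_const hX hσ)
  refine (((hsq.mul hX (hεinv.mul hX hεinv)).const_mul hX V).add
    (((HasSecondOrderExpansion.of_isBigO hfour).mul hX hεinv).const_mul hX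
      (2 * α * β))).congr' (.of_eq ?_) (by ring) (by ring) ?_
  · ext i
    simp only [div_eq_mul_inv, ← inv_pow]
    ring
  · field_simp
    ring

lemma exponent_expansion (hX : Tendsto X l (𝓝 0)) (hβ : β ≠ 0) (ha : β * a₀ ^ 2 = 1)
    (he₀ : e₀ ≠ 0) (hε : HasSecondOrderExpansion l X ε e₀ 0 e₁)
    (hσ : (fun i => σ i + u ^ 2 / 2) =O[l] X) (hd : d =O[l] fun i => X i ^ 3)
    (hQ : HasSecondOrderExpansion l X Q (Complex.I * u * (2 * β * a₀ / e₀)) 0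
      (-(Complex.I * u * (2 * β * a₀) * (1 / 2 + e₁ / e₀ ^ 2)))) :
    HasSecondOrderExpansion l X
      (fun i => d i + (V / ε i ^ 2 * X i ^ 2 + 2 * α * β / ε i * X i ^ 4) * σ i +
        V / (2 * β) * (Q i ^ 2 / (ε i * (1 - X i * Q i))) -
        α * (Complex.log (1 - X i * Q i) + X i * Q i))
      (-2 * V * u ^ 2 / e₀ ^ 3) (-4 * Complex.I * u ^ 3 * V * β * a₀ / e₀ ^ 4)
      (u ^ 2 * (V * (3 * e₀ ^ 2 + 12 * e₁) / (2 * e₀ ^ 4) - 2 * α * β / e₀ ^ 2) +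
        u ^ 4 * (8 * V * β / e₀ ^ 5)) := by
  have ha₂ : a₀ ^ 2 = 1 / β := by field_simp; linear_combination ha
  have ha₃ : a₀ ^ 3 = a₀ / β := by rw [pow_succ, ha₂]; ring
  have ha₄ : a₀ ^ 4 = 1 / β ^ 2 := by rw [show a₀ ^ 4 = (a₀ ^ 2) ^ 2 by ring, ha₂]; field_simp
  refine ((((HasSecondOrderExpansion.of_isBigO hd).add
    (expansion_linear_terms (V := V) (α := α) (β := β) hX he₀ hε hσ)).add
    ((hQ.sq_div_one_sub hX hε he₀).const_mul hX (V / (2 * β)))).add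
    ((hQ.clog_one_sub_add hX).const_mul hX (-α))).congr' (.of_eq (by ext; ring)) ?_ ?_ ?_
  · ring_nf
    simp only [Complex.I_sq, ha₂]
    field_simp
  · ring_nf
    simp only [Complex.I_pow_three, ha₃]
    field_simp
  · ring_nf
    simp only [Complex.I_sq, Complex.I_pow_four, ha₂, ha₄]
    field_simp
    ring

end Exponent

/-! ### Localisation of the saddle point -/

lemma betaT_pos {κ ξ t : ℝ} (hκ : 0 < κ) (hξ : ξ ≠ 0) (ht : 0 < t) : 0 < betaT κ ξ t := by
  have hexp : Real.exp (-(κ * t)) < 1 := by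
    rw [Real.exp_lt_one_iff, neg_lt_zero]
    positivity
  have : 0 < 1 - Real.exp (-(κ * t)) := sub_pos.mpr hexp
  unfold betaT
  positivity

lemma finite_setOf_quadratic_eq_zero {F : Type*} [Field F] {a : F} (b c : F) (ha : a ≠ 0) :
    {x : F | a * x ^ 2 + b * x + c = 0}.Finite := by
  have hp : Polynomial.C a * .X ^ 2 + Polynomial.C b * .X + Polynomial.C c ≠ 0 :=
    Polynomial.ne_zero_of_degree_gt (Polynomial.degree_quadratic ha ▸ two_pos)
  refine (Polynomial.finite_setOfPred_isRoot hp).subset fun x hx => ?_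
  simpa [Polynomial.IsRoot] using hx

/-- The points `z` at which the explicit formulas for `A` and `B` at `w = z/s` contain no division
by zero; at the other points they take junk values. -/
structure IsNondegenerate (κ ρ ξ s : ℝ) (z : ℂ) : Prop where
  ne_zero : z ≠ 0
  ne_scale : z ≠ s
  halfPhaseSq_ne_zero : halfPhaseSq κ ρ ξ s z ≠ 0

section Nondegenerate

variable {κ ρ ξ : ℝ}

lemma one_sub_sq_mul_sq_pos (hξ : ξ ≠ 0) (hρ : ρ ∈ Set.Ioo (-1 : ℝ) 1) :
    0 < (1 - ρ ^ 2) * ξ ^ 2 := by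
  have hρ2 : ρ ^ 2 < 1 := (sq_lt_one_iff_abs_lt_one ρ).mpr (abs_lt.mpr hρ)
  have := sub_pos.mpr hρ2
  positivity

lemma eventually_isNondegenerate {s : ℝ} (hξ : ξ ≠ 0) (hρ : ρ ∈ Set.Ioo (-1 : ℝ) 1) (hs : s ≠ 0)
    (u₀ : ℝ) : ∀ᶠ u : ℝ in 𝓝[≠] u₀, IsNondegenerate κ ρ ξ s u := by
  have hroots := finite_setOf_quadratic_eq_zero (s * ξ ^ 2 - 2 * κ * s * ρ * ξ) (κ ^ 2 * s ^ 2)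
    (neg_ne_zero.mpr (one_sub_sq_mul_sq_pos hξ hρ).ne')
  filter_upwards [nhdsNE_le_cofinite u₀ hroots.compl_mem_cofinite,
    nhdsNE_le_cofinite u₀ (Set.finite_singleton 0).compl_mem_cofinite,
    nhdsNE_le_cofinite u₀ (Set.finite_singleton s).compl_mem_cofinite] with u hu hu0 hus
  refine ⟨Complex.ofReal_ne_zero.mpr hu0, Complex.ofReal_injective.ne hus, ?_⟩
  have hphase : halfPhaseSq κ ρ ξ s u = ((s ^ 2 * (-((1 - ρ ^ 2) * ξ ^ 2) * u ^ 2 +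
      (s * ξ ^ 2 - 2 * κ * s * ρ * ξ) * u + κ ^ 2 * s ^ 2) / 4 : ℝ) : ℂ) := by
    rw [halfPhaseSq, scaledDrift]
    push_cast
    ring
  rw [hphase]
  exact Complex.ofReal_ne_zero.mpr (div_ne_zero (mul_ne_zero (pow_ne_zero 2 hs) hu) (by norm_num))

lemma eventually_isNondegenerate_of_tendsto {ι : Type*} {l : Filter ι} {s : ι → ℝ} {z : ι → ℂ}
    {m : ℝ} (hξ : ξ ≠ 0) (hρ : ρ ∈ Set.Ioo (-1 : ℝ) 1) (hs : Tendsto s l (𝓝 0))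
    (hs0 : ∀ᶠ i in l, 0 < s i) (hz : Tendsto z l (𝓝 m)) (hm : m ≠ 0) :
    ∀ᶠ i in l, IsNondegenerate κ ρ ξ (s i) (z i) := by
  have hm' : (m : ℂ) ≠ 0 := Complex.ofReal_ne_zero.mpr hm
  have hsC : Tendsto (fun i => (s i : ℂ)) l (𝓝 0) := by
    exact_mod_cast hs.ofReal
  have hdiscr : Tendsto
      (fun i => scaledDrift κ ρ ξ (s i) (z i) ^ 2 + z i * (s i - z i) * (ξ : ℂ) ^ 2) l
      (𝓝 (-((1 - ρ ^ 2) * ξ ^ 2 * m ^ 2 : ℝ))) := by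
    unfold scaledDrift
    convert (((hsC.const_mul (κ : ℂ)).sub (hz.const_mul ((ρ : ℂ) * ξ))).pow 2).add
      ((hz.mul (hsC.sub hz)).mul_const ((ξ : ℂ) ^ 2)) using 2
    push_cast
    ring
  have hlim : -(((1 - ρ ^ 2) * ξ ^ 2 * m ^ 2 : ℝ) : ℂ) ≠ 0 := by
    have := one_sub_sq_mul_sq_pos hξ hρ
    exact neg_ne_zero.mpr (Complex.ofReal_ne_zero.mpr (by positivity))
  have hdiff : Tendsto (fun i => z i - s i) l (𝓝 m) := by simpa using hz.sub hsC
  filter_upwards [hs0, hz.eventually_ne hm', hdiff.eventually_ne hm', hdiscr.eventually_ne hlim]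
    with i hi hzi hzsi hdi
  refine ⟨hzi, sub_ne_zero.mp hzsi, ?_⟩
  have hsi : (s i : ℂ) ≠ 0 := Complex.ofReal_ne_zero.mpr hi.ne'
  exact div_ne_zero (mul_ne_zero (pow_ne_zero 2 hsi) hdi) (by norm_num)

end Nondegenerate

/-- The value of `1 − 2 β_t B` at a real point. -/
def realGap (κ ρ ξ t s u : ℝ) : ℝ := 1 - 2 * betaT κ ξ t * (smoothB κ ρ ξ s u).re

section FixedTime

variable {κ θ ξ v ρ t s C R : ℝ}

lemma ofReal_realGap (u : ℝ) :
    (realGap κ ρ ξ t s u : ℂ) = 1 - 2 * (betaT κ ξ t : ℂ) * smoothB κ ρ ξ s u := by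
  rw [realGap, ← ofReal_re_smoothB]
  push_cast
  simp

lemma smoothG_im_of_realGap_neg {u : ℝ} (hD : 0 < (smoothDenom κ ρ ξ s u).re)
    (hgap : realGap κ ρ ξ t s u < 0) :
    (smoothG κ θ ξ v ρ t s u).im = -(cirShape κ θ ξ * Real.pi) := by
  have hlog : (Complex.log (realGap κ ρ ξ t s u)).im = Real.pi := by
    rw [Complex.log_im, Complex.arg_ofReal_of_neg hgap]
  rw [smoothG, cirLogMgf, ← ofReal_realGap, ← ofReal_re_smoothA hD, ← ofReal_re_smoothB,
    ← Complex.ofReal_mul, ← Complex.ofReal_div, Complex.add_im, Complex.sub_im,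
    Complex.im_ofReal_mul, hlog, Complex.ofReal_im, Complex.ofReal_im]
  ring

lemma hasDerivAt_smoothG {z : ℂ} (hD : 0 < (smoothDenom κ ρ ξ s z).re)
    (hslit : 1 - 2 * (betaT κ ξ t : ℂ) * smoothB κ ρ ξ s z ∈ Complex.slitPlane) :
    HasDerivAt (smoothG κ θ ξ v ρ t s) (deriv (smoothA κ θ ρ ξ s) z +
      (decayedVar κ v t / (1 - 2 * betaT κ ξ t * smoothB κ ρ ξ s z) ^ 2 +
        2 * cirShape κ θ ξ * betaT κ ξ t / (1 - 2 * betaT κ ξ t * smoothB κ ρ ξ s z)) *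
        deriv (smoothB κ ρ ξ s) z) z := by
  have hA := (differentiableAt_smoothA (θ := θ) hD).hasDerivAt
  have hB := (differentiableAt_smoothB fun h0 => hD.ne' (by rw [h0, Complex.zero_re])).hasDerivAt
  have hgap := (hB.const_mul (2 * (betaT κ ξ t : ℂ))).const_sub 1
  have hne := Complex.slitPlane_ne_zero hslit
  refine (hA.add (((hB.const_mul (decayedVar κ v t : ℂ)).div hgap hne).sub
    ((hgap.clog hslit).const_mul (cirShape κ θ ξ : ℂ)))).congr_deriv ?_
  field_simp
  ring

lemma SmallTimeBounds.abs_re_smoothB_sub_le (h : SmallTimeBounds κ θ ρ ξ C R s) {u : ℝ}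
    (hu : |u| ≤ R) : |(smoothB κ ρ ξ s u).re - u ^ 2 / 2| ≤ C * s := by
  have hle := h.smoothB_le u (by rwa [Complex.norm_real])
  rw [← ofReal_re_smoothB] at hle
  exact_mod_cast hle

lemma SmallTimeBounds.hestLambdaC_eq (h : SmallTimeBounds κ θ ρ ξ C R s) (hξ : ξ ≠ 0) {z : ℂ}
    (hz : ‖z‖ ≤ R) (hz' : IsNondegenerate κ ρ ξ s z) :
    hestLambdaC κ θ ξ v ρ t (s ^ 2) z = s * smoothG κ θ ξ v ρ t s z :=
  hestLambdaC_eq_smoothG hξ h.pos hz'.ne_zero hz'.ne_scale hz'.halfPhaseSq_ne_zero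
    (h.phase_lt z hz) (h.denom_pos z hz)

lemma SmallTimeBounds.im_hestLambda_ne_zero (h : SmallTimeBounds κ θ ρ ξ C R s) (hξ : ξ ≠ 0)
    (hα : cirShape κ θ ξ ≠ 0) {u : ℝ} (hu : |u| ≤ R) (hu' : IsNondegenerate κ ρ ξ s u)
    (hgap : realGap κ ρ ξ t s u < 0) : (hestLambda κ θ ξ v ρ t (s ^ 2) u).im ≠ 0 := by
  have hnorm : ‖(u : ℂ)‖ ≤ R := by rwa [Complex.norm_real]
  rw [hestLambda, h.hestLambdaC_eq hξ hnorm hu', Complex.im_ofReal_mul,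
    smoothG_im_of_realGap_neg (h.denom_pos u hnorm) hgap]
  exact mul_ne_zero h.pos.ne' (neg_ne_zero.mpr (mul_ne_zero hα Real.pi_ne_zero))

lemma abs_lt_of_mem_hestDom {τ M u : ℝ} (hM : 0 < M)
    (hpos : (hestLambda κ θ ξ v ρ t τ M).im ≠ 0) (hneg : (hestLambda κ θ ξ v ρ t τ (-M)).im ≠ 0)
    (hu : u ∈ hestDom κ θ ξ v ρ t τ) : |u| < M := by
  have hconn : (hestDom κ θ ξ v ρ t τ).OrdConnected :=
    isPreconnected_connectedComponentIn.ordConnected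
  have hreal : hestDom κ θ ξ v ρ t τ ⊆ {u : ℝ | (hestLambda κ θ ξ v ρ t τ u).im = 0} :=
    (connectedComponentIn_subset _ _).trans interior_subset
  have hzero : (0 : ℝ) ∈ hestDom κ θ ξ v ρ t τ :=
    mem_connectedComponentIn (connectedComponentIn_nonempty_iff.mp ⟨u, hu⟩)
  refine abs_lt.mpr ⟨?_, ?_⟩
  · by_contra! hle
    exact hneg (hreal (hconn.out hu hzero ⟨hle, by linarith⟩))
  · by_contra! hle
    exact hpos (hreal (hconn.out hzero hu ⟨hM.le, hle⟩))

lemma SmallTimeBounds.realGap_neg (h : SmallTimeBounds κ θ ρ ξ C R s) (hβ : 0 < betaT κ ξ t)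
    {u : ℝ} (hu : |u| ≤ R) (hu4 : betaT κ ξ t * u ^ 2 = 4) (hC : betaT κ ξ t * (C * s) < 1 / 4) :
    realGap κ ρ ξ t s u < 0 := by
  have hB := mul_le_mul_of_nonneg_left (abs_le.mp (h.abs_re_smoothB_sub_le hu)).1 hβ.le
  rw [realGap]
  linarith

lemma SmallTimeBounds.eventually_realGap_nonneg (h : SmallTimeBounds κ θ ρ ξ C R s) (hξ : ξ ≠ 0)
    (hρ : ρ ∈ Set.Ioo (-1 : ℝ) 1) (hα : cirShape κ θ ξ ≠ 0) {u : ℝ} (hu : |u| < R)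
    (hdom : u ∈ hestDom κ θ ξ v ρ t (s ^ 2)) :
    ∀ᶠ y in 𝓝[≠] u, 0 ≤ realGap κ ρ ξ t s y := by
  have hball : ∀ᶠ y : ℝ in 𝓝 u, |y| < R := continuous_abs.continuousAt.eventually_lt_const hu
  have hreal : ∀ᶠ y : ℝ in 𝓝 u, (hestLambda κ θ ξ v ρ t (s ^ 2) y).im = 0 :=
    mem_interior_iff_mem_nhds.mp (connectedComponentIn_subset _ _ hdom)
  filter_upwards [eventually_isNondegenerate hξ hρ h.pos.ne' u, nhdsWithin_le_nhds hball,
    nhdsWithin_le_nhds hreal] with y hy hyR hyim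
  by_contra! hneg
  exact h.im_hestLambda_ne_zero hξ hα hyR.le hy hneg hyim

lemma SmallTimeBounds.hasDerivAt_realGap (h : SmallTimeBounds κ θ ρ ξ C R s) {u : ℝ}
    (hu : |u| ≤ R) : HasDerivAt (realGap κ ρ ξ t s)
      (-(2 * betaT κ ξ t * (deriv (smoothB κ ρ ξ s) u).re)) u :=
  ((h.differentiableAt_smoothB (by rwa [Complex.norm_real])).hasDerivAt.real_of_complex.const_mul
    _).const_sub 1

-- A zero of the gap would be a local minimum, hence a zero of `B' ≈ u`; but `gap ≈ 1` near `0`.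
lemma SmallTimeBounds.realGap_pos (h : SmallTimeBounds κ θ ρ ξ C R s) (hβ : 0 < betaT κ ξ t)
    {u : ℝ} (hu : |u| + 1 ≤ R) (hC : betaT κ ξ t * (C * s) < 1 / 4)
    (hC2 : betaT κ ξ t * (C * s) ^ 2 < 1 / 4) (hnear : ∀ᶠ y in 𝓝[≠] u, 0 ≤ realGap κ ρ ξ t s y) :
    0 < realGap κ ρ ξ t s u := by
  have huR : |u| ≤ R := by linarith
  have hderiv := h.hasDerivAt_realGap (t := t) huR
  have hnonneg : 0 ≤ realGap κ ρ ξ t s u :=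
    ge_of_tendsto (hderiv.continuousAt.tendsto.mono_left nhdsWithin_le_nhds) hnear
  refine hnonneg.lt_of_ne fun hzero => ?_
  have hmin : IsLocalMin (realGap κ ρ ξ t s) u := by
    filter_upwards [eventually_nhdsWithin_iff.mp hnear] with y hy
    rcases eq_or_ne y u with rfl | hyu
    · exact le_rfl
    · exact hzero ▸ hy hyu
  have hBzero : (deriv (smoothB κ ρ ξ s) u).re = 0 := by
    simpa [hβ.ne'] using hmin.hasDerivAt_eq_zero hderiv
  have hule : |u| ≤ C * s := by
    have hle := h.deriv_smoothB_le (z := u) (by rwa [Complex.norm_real])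
    rwa [← ofReal_re_deriv_smoothB, hBzero, Complex.ofReal_zero, zero_sub, norm_neg,
      Complex.norm_real] at hle
  have hsq : u ^ 2 ≤ (C * s) ^ 2 :=
    sq_le_sq' (by linarith [neg_abs_le u]) ((le_abs_self u).trans hule)
  have hB := (abs_le.mp (h.abs_re_smoothB_sub_le huR)).2
  rw [realGap] at hzero
  linarith [mul_le_mul_of_nonneg_left hB hβ.le, mul_le_mul_of_nonneg_left hsq hβ.le]

end FixedTime

/-- What is known at a real point `u` whose slope of `Λ_τ`, `τ = s²`, is `k`: it lies well inside
the disc `‖z‖ ≤ R` of the small-time bounds and on the real side of the logarithm, where `Λ_τ` is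
`s` times the branch-free log-mgf and the saddle equation is explicit. -/
structure SaddleAt (κ θ ξ v ρ t k C R s u : ℝ) : Prop extends SmallTimeBounds κ θ ρ ξ C R s where
  abs_add_two_le : |u| + 2 ≤ R
  gap_pos : 0 < realGap κ ρ ξ t s u
  hestLambdaC_eq_self : hestLambdaC κ θ ξ v ρ t (s ^ 2) u = s * smoothG κ θ ξ v ρ t s u
  equation : (s : ℂ) * (deriv (smoothA κ θ ρ ξ s) u +
    (decayedVar κ v t / (realGap κ ρ ξ t s u : ℂ) ^ 2 +
      2 * cirShape κ θ ξ * betaT κ ξ t / realGap κ ρ ξ t s u) * deriv (smoothB κ ρ ξ s) u) = k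

section Saddle

variable {κ θ ξ v ρ t k C R s : ℝ}

lemma SmallTimeBounds.saddleAt (h : SmallTimeBounds κ θ ρ ξ C R s) (hξ : ξ ≠ 0)
    (hρ : ρ ∈ Set.Ioo (-1 : ℝ) 1) (hk : k ≠ 0) {u : ℝ} (hu : |u| + 2 ≤ R)
    (hgap : 0 < realGap κ ρ ξ t s u)
    (hderiv : deriv (hestLambda κ θ ξ v ρ t (s ^ 2)) u = k) :
    SaddleAt κ θ ξ v ρ t k C R s u := by
  have huR : ‖(u : ℂ)‖ ≤ R := by rw [Complex.norm_real, Real.norm_eq_abs]; linarith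
  have hslit : 1 - 2 * (betaT κ ξ t : ℂ) * smoothB κ ρ ξ s u ∈ Complex.slitPlane := by
    rw [← ofReal_realGap]
    exact Complex.ofReal_mem_slitPlane.mpr hgap
  have hG := ((hasDerivAt_smoothG (θ := θ) (v := v) (h.denom_pos u huR) hslit).const_mul
    (s : ℂ)).comp_ofReal
  have hball : ∀ᶠ y : ℝ in 𝓝 u, |y| < R :=
    continuous_abs.continuousAt.eventually_lt_const (by linarith)
  have hpunctured : hestLambda κ θ ξ v ρ t (s ^ 2) =ᶠ[𝓝[≠] u]
      fun y : ℝ => s * smoothG κ θ ξ v ρ t s y := by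
    filter_upwards [eventually_isNondegenerate hξ hρ h.pos.ne' u, nhdsWithin_le_nhds hball]
      with y hy hyR
    exact h.hestLambdaC_eq hξ (by rw [Complex.norm_real]; exact hyR.le) hy
  have hdiff : DifferentiableAt ℝ (hestLambda κ θ ξ v ρ t (s ^ 2)) u :=
    differentiableAt_of_deriv_ne_zero (hderiv ▸ Complex.ofReal_ne_zero.mpr hk)
  have heq := (hdiff.continuousAt.eventuallyEq_nhds_iff_eventuallyEq_nhdsNE hG.continuousAt).mp
    hpunctured
  refine ⟨h, hu, hgap, heq.eq_of_nhds, ?_⟩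
  rw [heq.deriv_eq, hG.deriv, ← ofReal_realGap] at hderiv
  exact hderiv

lemma eventually_isNondegenerate_ofReal (hξ : ξ ≠ 0) (hρ : ρ ∈ Set.Ioo (-1 : ℝ) 1) {m : ℝ}
    (hm : m ≠ 0) : ∀ᶠ s in 𝓝[>] (0 : ℝ), IsNondegenerate κ ρ ξ s m :=
  eventually_isNondegenerate_of_tendsto hξ hρ (tendsto_id.mono_left nhdsWithin_le_nhds)
    self_mem_nhdsWithin tendsto_const_nhds hm

lemma eventually_mul_lt_and_mul_sq_lt (β C : ℝ) :
    ∀ᶠ s in 𝓝[>] (0 : ℝ), β * (C * s) < 1 / 4 ∧ β * (C * s) ^ 2 < 1 / 4 := by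
  have hlin : Continuous fun s : ℝ => β * (C * s) := by fun_prop
  have hquad : Continuous fun s : ℝ => β * (C * s) ^ 2 := by fun_prop
  exact nhdsWithin_le_nhds
    ((hlin.continuousAt.eventually_lt_const (by norm_num)).and
      (hquad.continuousAt.eventually_lt_const (by norm_num)))

lemma exists_eventually_saddleAt (hκ : 0 < κ) (hθ : θ ≠ 0) (hξ : ξ ≠ 0)
    (hρ : ρ ∈ Set.Ioo (-1 : ℝ) 1) (ht : 0 < t) (hk : k ≠ 0) :
    ∃ C R, ∀ᶠ s in 𝓝[>] (0 : ℝ), ∀ u ∈ hestDom κ θ ξ v ρ t (s ^ 2),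
      deriv (hestLambda κ θ ξ v ρ t (s ^ 2)) u = k → SaddleAt κ θ ξ v ρ t k C R s u := by
  have hβ := betaT_pos hκ hξ ht
  have hα : cirShape κ θ ξ ≠ 0 := by unfold cirShape; positivity
  obtain ⟨M, hM, hM4⟩ : ∃ M, 0 < M ∧ betaT κ ξ t * M ^ 2 = 4 := by
    refine ⟨2 / √(betaT κ ξ t), by positivity, ?_⟩
    rw [div_pow, Real.sq_sqrt hβ.le]
    field_simp
    norm_num
  obtain ⟨C, hC⟩ := exists_eventually_smallTimeBounds κ θ ρ ξ (M + 2)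
  refine ⟨C, M + 2, ?_⟩
  filter_upwards [hC, eventually_mul_lt_and_mul_sq_lt (betaT κ ξ t) C,
    eventually_isNondegenerate_ofReal hξ hρ hM.ne',
    eventually_isNondegenerate_ofReal hξ hρ (neg_ne_zero.mpr hM.ne')]
    with s hs ⟨hs1, hs2⟩ hposdeg hnegdeg u hu hderiv
  have hMabs : |M| ≤ M + 2 := by rw [abs_of_pos hM]; linarith
  have hMabs' : |-M| ≤ M + 2 := by rwa [abs_neg]
  have hM4' : betaT κ ξ t * (-M) ^ 2 = 4 := by rwa [neg_sq]
  have huM : |u| < M := abs_lt_of_mem_hestDom hM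
    (hs.im_hestLambda_ne_zero hξ hα hMabs hposdeg (hs.realGap_neg hβ hMabs hM4 hs1))
    (hs.im_hestLambda_ne_zero hξ hα hMabs' hnegdeg (hs.realGap_neg hβ hMabs' hM4' hs1)) hu
  have hnear := hs.eventually_realGap_nonneg hξ hρ hα (by linarith) hu
  exact hs.saddleAt hξ hρ hk (by linarith) (hs.realGap_pos hβ (by linarith) hs1 hs2 hnear) hderiv

end Saddle

/-! ### Expansion along the saddle points -/

/-- The relations that determine the limit `a₀` of the saddle point, where `1 - 2βB` vanishes, and
the leading coefficient `e₀` of `1 - 2βB` at the saddle point, in powers of `τ^(1/4)`. -/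
structure IsLeadingOrder (β V k a₀ e₀ : ℝ) : Prop where
  variance_pos : 0 < V
  mul_sq_eq_one : β * a₀ ^ 2 = 1
  mul_slope_pos : 0 < a₀ * k
  gap_pos : 0 < e₀
  slope_mul_sq : k * e₀ ^ 2 = V * a₀

/-- A family of saddle points `u i` of `Λ_τ`, with `τ = (x i)^8`, for small times. -/
structure SaddleFamily {ι : Type*} (l : Filter ι) (x u : ι → ℝ) (κ θ ξ v ρ t k C R : ℝ) :
    Prop where
  tendsto_zero : Tendsto x l (𝓝 0)
  pos : ∀ᶠ i in l, 0 < x i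
  saddleAt : ∀ᶠ i in l, SaddleAt κ θ ξ v ρ t k C R (x i ^ 4) (u i)

/-- The remainder of the first-order Taylor formula at `z` with increment `h`. -/
def taylorRemainder (f : ℂ → ℂ) (z h : ℂ) : ℂ := f (z + h) - f z - deriv f z * h

/-- The increment `i y τ^(3/8)`, with `x = τ^(1/8)`, at which `Φ` evaluates `Λ_τ`. -/
def saddleShift (x y : ℝ) : ℂ := Complex.I * y * (x : ℂ) ^ 3

/-- The value of `1 - 2 β_t B` at the point `u` at time `x^8`, relative to its order `x²`. -/
def scaledGap (κ ρ ξ t x u : ℝ) : ℂ := realGap κ ρ ξ t (x ^ 4) u / (x : ℂ) ^ 2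

/-- The Taylor remainder of `B` at `u` for the increment of `Φ`, relative to its order `x⁶`. -/
def scaledCurvature (κ ρ ξ x u y : ℝ) : ℂ :=
  taylorRemainder (smoothB κ ρ ξ (x ^ 4)) u (saddleShift x y) / (x : ℂ) ^ 6

/-- The relative decrease of `1 - 2 β_t B` over the increment of `Φ`, divided by its order `x`. -/
def scaledDecrease (κ ρ ξ t x u y : ℝ) : ℂ :=
  2 * betaT κ ξ t * (Complex.I * y * deriv (smoothB κ ρ ξ (x ^ 4)) u +
    (x : ℂ) ^ 3 * scaledCurvature κ ρ ξ x u y) / scaledGap κ ρ ξ t x u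

lemma norm_saddleShift {x : ℝ} (hx : 0 < x) (y : ℝ) : ‖saddleShift x y‖ = |y| * x ^ 3 := by
  simp [saddleShift, abs_of_pos hx]

lemma saddleShift_sq (x y : ℝ) : saddleShift x y ^ 2 = -((y : ℂ) ^ 2 * (x : ℂ) ^ 6) := by
  rw [saddleShift, mul_pow, mul_pow, Complex.I_sq]
  ring

lemma SaddleAt.inv_mul_hestLambdaC_sub {κ θ ξ v ρ t k C R s u : ℝ}
    (h : SaddleAt κ θ ξ v ρ t k C R s u) (hξ : ξ ≠ 0) {z : ℂ} (hz : ‖z‖ ≤ R)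
    (hdeg : IsNondegenerate κ ρ ξ s z) :
    (s : ℂ)⁻¹ * (hestLambdaC κ θ ξ v ρ t (s ^ 2) z - hestLambdaC κ θ ξ v ρ t (s ^ 2) u) =
      smoothG κ θ ξ v ρ t s z - smoothG κ θ ξ v ρ t s u := by
  rw [h.toSmallTimeBounds.hestLambdaC_eq hξ hz hdeg, h.hestLambdaC_eq_self, ← mul_sub,
    inv_mul_cancel_left₀ (Complex.ofReal_ne_zero.mpr h.pos.ne')]

-- The saddle equation cancels the linear terms of the increment of `Λ_τ` against `-i k y / x`.
lemma SaddleAt.exponent_eq {κ θ ξ v ρ t k C R x u y : ℝ}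
    (h : SaddleAt κ θ ξ v ρ t k C R (x ^ 4) u) (hξ : ξ ≠ 0) (hβ : betaT κ ξ t ≠ 0) (hx : 0 < x)
    (hz : ‖(u : ℂ) + saddleShift x y‖ ≤ R)
    (hdeg : IsNondegenerate κ ρ ξ (x ^ 4) (u + saddleShift x y))
    (hne : (x : ℂ) * scaledDecrease κ ρ ξ t x u y ≠ 1) :
    -Complex.I * y * k * (x : ℂ)⁻¹ + ((x : ℂ) ^ 4)⁻¹ *
        (hestLambdaC κ θ ξ v ρ t ((x ^ 4) ^ 2) (u + saddleShift x y) -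
          hestLambdaC κ θ ξ v ρ t ((x ^ 4) ^ 2) u) =
      taylorRemainder (smoothA κ θ ρ ξ (x ^ 4)) u (saddleShift x y) +
        (decayedVar κ v t / scaledGap κ ρ ξ t x u ^ 2 * (x : ℂ) ^ 2 +
          2 * cirShape κ θ ξ * betaT κ ξ t / scaledGap κ ρ ξ t x u * (x : ℂ) ^ 4) *
          scaledCurvature κ ρ ξ x u y +
        decayedVar κ v t / (2 * betaT κ ξ t) * (scaledDecrease κ ρ ξ t x u y ^ 2 /
          (scaledGap κ ρ ξ t x u * (1 - x * scaledDecrease κ ρ ξ t x u y))) -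
        cirShape κ θ ξ * (Complex.log (1 - x * scaledDecrease κ ρ ξ t x u y) +
          x * scaledDecrease κ ρ ξ t x u y) := by
  have hxc : (x : ℂ) ≠ 0 := Complex.ofReal_ne_zero.mpr hx.ne'
  have hβc : (betaT κ ξ t : ℂ) ≠ 0 := Complex.ofReal_ne_zero.mpr hβ
  have hec : (realGap κ ρ ξ t (x ^ 4) u : ℂ) ≠ 0 := Complex.ofReal_ne_zero.mpr h.gap_pos.ne'
  have hgap : scaledGap κ ρ ξ t x u = realGap κ ρ ξ t (x ^ 4) u / (x : ℂ) ^ 2 := rfl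
  have hB : smoothB κ ρ ξ (x ^ 4) (u + saddleShift x y) = smoothB κ ρ ξ (x ^ 4) u +
      (deriv (smoothB κ ρ ξ (x ^ 4)) u * saddleShift x y +
        (x : ℂ) ^ 6 * scaledCurvature κ ρ ξ x u y) := by
    rw [scaledCurvature, taylorRemainder, mul_div_cancel₀ _ (pow_ne_zero 6 hxc)]
    ring
  have hη : (x : ℂ) * scaledDecrease κ ρ ξ t x u y = 2 * betaT κ ξ t *
      (deriv (smoothB κ ρ ξ (x ^ 4)) u * saddleShift x y +
        (x : ℂ) ^ 6 * scaledCurvature κ ρ ξ x u y) / realGap κ ρ ξ t (x ^ 4) u := by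
    rw [scaledDecrease, hgap, saddleShift]
    field_simp
  have hcir := cirLogMgf_add_sub (V := decayedVar κ v t) (α := cirShape κ θ ξ) hβ h.gap_pos
    (ofReal_realGap u).symm hη hne
  have hne' := sub_ne_zero.mpr hne.symm
  have hΛ := h.inv_mul_hestLambdaC_sub hξ hz hdeg
  have heq := h.equation
  rw [Complex.ofReal_pow] at hΛ heq
  rw [hΛ, smoothG, smoothG, hB, add_sub_add_comm, hcir, ← heq, taylorRemainder, hgap,
    saddleShift]
  field_simp
  ring

namespace SaddleFamily

variable {ι : Type*} {l : Filter ι} {x u : ι → ℝ} {κ θ ξ v ρ t k C R a₀ e₀ : ℝ}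

lemma isBigO_pow_four_of_le {E : Type*} [Norm E] {f : ι → E}
    (h : ∀ᶠ i in l, ‖f i‖ ≤ C * x i ^ 4) : f =O[l] fun i => x i ^ 4 :=
  .of_bound C (h.mono fun i hi => by rwa [Real.norm_of_nonneg (by positivity)])

lemma eventually_norm_le (h : SaddleFamily l x u κ θ ξ v ρ t k C R) :
    ∀ᶠ i in l, ‖(u i : ℂ)‖ + 1 ≤ R :=
  h.saddleAt.mono fun i hi => by
    rw [Complex.norm_real, Real.norm_eq_abs]
    linarith [hi.abs_add_two_le]

lemma isBigO_one (h : SaddleFamily l x u κ θ ξ v ρ t k C R) : u =O[l] fun _ => (1 : ℝ) :=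
  .of_bound R (h.saddleAt.mono fun i hi => by
    rw [norm_one, mul_one, Real.norm_eq_abs]
    linarith [hi.abs_add_two_le])

lemma deriv_smoothB_sub_isBigO (h : SaddleFamily l x u κ θ ξ v ρ t k C R) :
    (fun i => (deriv (smoothB κ ρ ξ (x i ^ 4)) (u i)).re - u i) =O[l] fun i => x i ^ 4 := by
  refine isBigO_pow_four_of_le (C := C) ?_
  filter_upwards [h.saddleAt, h.eventually_norm_le] with i hi hu
  have hle := hi.deriv_smoothB_le hu
  rw [← ofReal_re_deriv_smoothB, ← Complex.ofReal_sub, Complex.norm_real] at hle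
  exact hle

lemma gap_sub_isBigO (h : SaddleFamily l x u κ θ ξ v ρ t k C R) :
    (fun i => realGap κ ρ ξ t (x i ^ 4) (u i) - (1 - betaT κ ξ t * u i ^ 2)) =O[l]
      fun i => x i ^ 4 := by
  have hB : (fun i => (smoothB κ ρ ξ (x i ^ 4) (u i)).re - u i ^ 2 / 2) =O[l]
      fun i => x i ^ 4 := by
    refine isBigO_pow_four_of_le (C := C) ?_
    filter_upwards [h.saddleAt] with i hi
    exact hi.abs_re_smoothB_sub_le (by linarith [hi.abs_add_two_le])
  refine (hB.const_mul_left (-2 * betaT κ ξ t)).congr_left fun i => ?_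
  rw [realGap]
  ring

lemma deriv_smoothA_isBigO (h : SaddleFamily l x u κ θ ξ v ρ t k C R) :
    (fun i => (deriv (smoothA κ θ ρ ξ (x i ^ 4)) (u i)).re) =O[l] fun i => x i ^ 4 := by
  refine isBigO_pow_four_of_le (C := C) ?_
  filter_upwards [h.saddleAt, h.eventually_norm_le] with i hi hu
  exact (Complex.abs_re_le_norm _).trans (hi.deriv_smoothA_le hu)

lemma tendsto_pow_four (h : SaddleFamily l x u κ θ ξ v ρ t k C R) :
    Tendsto (fun i => x i ^ 4) l (𝓝 0) := by
  simpa using h.tendsto_zero.pow 4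

lemma deriv_smoothB_isBigO_one (h : SaddleFamily l x u κ θ ξ v ρ t k C R) :
    (fun i => (deriv (smoothB κ ρ ξ (x i ^ 4)) (u i)).re) =O[l] fun _ => (1 : ℝ) :=
  ((h.deriv_smoothB_sub_isBigO.trans (h.tendsto_pow_four.isBigO_one ℝ)).add
    h.isBigO_one).congr_left fun i => by ring

lemma rescaledSaddle (h : SaddleFamily l x u κ θ ξ v ρ t k C R) :
    RescaledSaddle l x (fun i => (deriv (smoothB κ ρ ξ (x i ^ 4)) (u i)).re)
      (fun i => realGap κ ρ ξ t (x i ^ 4) (u i))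
      (fun i => (deriv (smoothA κ θ ρ ξ (x i ^ 4)) (u i)).re)
      (betaT κ ξ t) (decayedVar κ v t) (cirShape κ θ ξ) k where
  tendsto_zero := h.tendsto_zero
  pos := h.pos
  gap_pos := h.saddleAt.mono fun i hi => hi.gap_pos
  isBigO_one := h.deriv_smoothB_isBigO_one
  gap_sub_isBigO := by
    have hsq := (h.deriv_smoothB_sub_isBigO.mul
      (h.deriv_smoothB_isBigO_one.add h.isBigO_one)).const_mul_left (betaT κ ξ t)
    simp only [mul_one] at hsq
    exact (h.gap_sub_isBigO.add hsq).congr_left fun i => by ring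
  drift_isBigO := h.deriv_smoothA_isBigO
  equation := h.saddleAt.mono fun i hi => by
    have hre := congrArg Complex.re hi.equation
    rw [← ofReal_re_deriv_smoothB] at hre
    norm_cast at hre
    rw [Complex.re_ofReal_mul, Complex.add_re, Complex.ofReal_re] at hre
    rw [← hre]
    ring

lemma tendsto (h : SaddleFamily l x u κ θ ξ v ρ t k C R)
    (hlead : IsLeadingOrder (betaT κ ξ t) (decayedVar κ v t) k a₀ e₀) :
    Tendsto (fun i => (u i : ℂ)) l (𝓝 a₀) := by
  have hB := (h.rescaledSaddle.expansion hlead.variance_pos hlead.mul_sq_eq_one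
    hlead.mul_slope_pos hlead.gap_pos hlead.slope_mul_sq).tendsto h.tendsto_zero
  have hdiff := h.deriv_smoothB_sub_isBigO.trans_tendsto h.tendsto_pow_four
  simpa using (hB.sub hdiff).ofReal

lemma deriv_smoothB_expansion (h : SaddleFamily l x u κ θ ξ v ρ t k C R)
    (hlead : IsLeadingOrder (betaT κ ξ t) (decayedVar κ v t) k a₀ e₀) :
    HasSecondOrderExpansion l (fun i => (x i : ℂ))
      (fun i => deriv (smoothB κ ρ ξ (x i ^ 4)) (u i)) a₀ 0 (-(a₀ * e₀ / 2)) :=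
  (h.rescaledSaddle.expansion hlead.variance_pos hlead.mul_sq_eq_one hlead.mul_slope_pos
    hlead.gap_pos hlead.slope_mul_sq).ofReal.congr'
    (.of_forall fun i => ofReal_re_deriv_smoothB _) rfl (by simp) (by push_cast; ring)

lemma scaledGap_expansion (h : SaddleFamily l x u κ θ ξ v ρ t k C R)
    (hlead : IsLeadingOrder (betaT κ ξ t) (decayedVar κ v t) k a₀ e₀) {e₁ : ℝ}
    (he₁ : e₁ = a₀ * (2 * cirShape κ θ ξ * betaT κ ξ t - decayedVar κ v t / 2) / (2 * k)) :
    HasSecondOrderExpansion l (fun i => (x i : ℂ)) (fun i => scaledGap κ ρ ξ t (x i) (u i))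
      e₀ 0 e₁ :=
  (h.rescaledSaddle.scaledGap_expansion hlead.variance_pos hlead.mul_sq_eq_one
    hlead.mul_slope_pos hlead.gap_pos hlead.slope_mul_sq).ofReal.congr'
    (.of_forall fun i => by simp only [scaledGap]; push_cast; rfl) rfl (by simp) (by rw [he₁])

lemma ofReal_tendsto_zero (h : SaddleFamily l x u κ θ ξ v ρ t k C R) :
    Tendsto (fun i => (x i : ℂ)) l (𝓝 0) := by
  exact_mod_cast h.tendsto_zero.ofReal

lemma saddleShift_tendsto (h : SaddleFamily l x u κ θ ξ v ρ t k C R) (y : ℝ) :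
    Tendsto (fun i => saddleShift (x i) y) l (𝓝 0) := by
  simpa [saddleShift] using (h.ofReal_tendsto_zero.pow 3).const_mul (Complex.I * (y : ℂ))

lemma eventually_norm_add_saddleShift_le (h : SaddleFamily l x u κ θ ξ v ρ t k C R) (y : ℝ) :
    ∀ᶠ i in l, ‖(u i : ℂ) + saddleShift (x i) y‖ + 1 ≤ R := by
  filter_upwards [h.saddleAt, (h.saddleShift_tendsto y).norm.eventually_le_const
    (by simp : ‖(0 : ℂ)‖ < 1)] with i hi hshift
  have hnorm := norm_add_le (u i : ℂ) (saddleShift (x i) y)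
  rw [Complex.norm_real, Real.norm_eq_abs] at hnorm
  linarith [hi.abs_add_two_le]

lemma scaledCurvature_isBigO (h : SaddleFamily l x u κ θ ξ v ρ t k C R) (y : ℝ) :
    (fun i => scaledCurvature κ ρ ξ (x i) (u i) y + (y : ℂ) ^ 2 / 2) =O[l]
      fun i => (x i : ℂ) := by
  refine .of_bound (2 * C * |y|) ?_
  filter_upwards [h.saddleAt, h.pos, h.eventually_norm_le,
    h.eventually_norm_add_saddleShift_le y] with i hi hx hu huh
  have hxc : (x i : ℂ) ≠ 0 := Complex.ofReal_ne_zero.mpr hx.ne'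
  have heq : scaledCurvature κ ρ ξ (x i) (u i) y + (y : ℂ) ^ 2 / 2 =
      (taylorRemainder (smoothB κ ρ ξ (x i ^ 4)) (u i) (saddleShift (x i) y) -
        saddleShift (x i) y ^ 2 / 2) / (x i : ℂ) ^ 6 := by
    rw [saddleShift_sq, scaledCurvature]
    field_simp
    ring
  have htaylor := hi.smoothB_taylor_le hu huh
  rw [norm_saddleShift hx] at htaylor
  rw [heq, norm_div, norm_pow, Complex.norm_real, Real.norm_of_nonneg hx.le,
    div_le_iff₀ (by positivity)]
  exact htaylor.trans_eq (by ring)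

lemma taylorRemainder_smoothA_isBigO (h : SaddleFamily l x u κ θ ξ v ρ t k C R) (y : ℝ) :
    (fun i => taylorRemainder (smoothA κ θ ρ ξ (x i ^ 4)) (u i) (saddleShift (x i) y)) =O[l]
      fun i => (x i : ℂ) ^ 3 := by
  have hbound : (fun i => taylorRemainder (smoothA κ θ ρ ξ (x i ^ 4)) (u i)
      (saddleShift (x i) y)) =O[l] fun i => x i ^ 7 := by
    refine .of_bound (2 * C * |y|) ?_
    filter_upwards [h.saddleAt, h.pos, h.eventually_norm_le,
      h.eventually_norm_add_saddleShift_le y] with i hi hx hu huh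
    have htaylor := hi.smoothA_taylor_le hu huh
    rw [norm_saddleShift hx] at htaylor
    rw [norm_pow, Real.norm_of_nonneg hx.le]
    exact htaylor.trans_eq (by ring)
  refine (hbound.trans (isBigO_pow_of_tendsto_zero h.tendsto_zero (by norm_num : 3 ≤ 7))).trans ?_
  exact .of_bound 1 (.of_forall fun i => by simp)

lemma scaledDecrease_expansion (h : SaddleFamily l x u κ θ ξ v ρ t k C R)
    (hlead : IsLeadingOrder (betaT κ ξ t) (decayedVar κ v t) k a₀ e₀) {e₁ : ℝ}
    (he₁ : e₁ = a₀ * (2 * cirShape κ θ ξ * betaT κ ξ t - decayedVar κ v t / 2) / (2 * k))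
    (y : ℝ) :
    HasSecondOrderExpansion l (fun i => (x i : ℂ))
      (fun i => scaledDecrease κ ρ ξ t (x i) (u i) y)
      (Complex.I * y * (2 * betaT κ ξ t * a₀ / e₀)) 0
      (-(Complex.I * y * (2 * betaT κ ξ t * a₀) * (1 / 2 + e₁ / (e₀ : ℂ) ^ 2))) :=
  expansion_two_mul_div h.ofReal_tendsto_zero
    (Complex.ofReal_ne_zero.mpr hlead.gap_pos.ne') (h.deriv_smoothB_expansion hlead)
    (h.scaledGap_expansion hlead he₁)
    (isBigO_one_of_add_const h.ofReal_tendsto_zero (h.scaledCurvature_isBigO y))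

lemma eventually_mul_scaledDecrease_ne_one (h : SaddleFamily l x u κ θ ξ v ρ t k C R)
    (hlead : IsLeadingOrder (betaT κ ξ t) (decayedVar κ v t) k a₀ e₀) (y : ℝ) :
    ∀ᶠ i in l, (x i : ℂ) * scaledDecrease κ ρ ξ t (x i) (u i) y ≠ 1 := by
  have hlim := h.ofReal_tendsto_zero.mul
    ((h.scaledDecrease_expansion hlead rfl y).tendsto h.ofReal_tendsto_zero)
  rw [zero_mul] at hlim
  exact hlim.eventually_ne zero_ne_one

lemma eventually_isNondegenerate_add_saddleShift (h : SaddleFamily l x u κ θ ξ v ρ t k C R)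
    (hξ : ξ ≠ 0) (hρ : ρ ∈ Set.Ioo (-1 : ℝ) 1)
    (hlead : IsLeadingOrder (betaT κ ξ t) (decayedVar κ v t) k a₀ e₀) (y : ℝ) :
    ∀ᶠ i in l, IsNondegenerate κ ρ ξ (x i ^ 4) (u i + saddleShift (x i) y) :=
  eventually_isNondegenerate_of_tendsto hξ hρ h.tendsto_pow_four
    (h.pos.mono fun i hi => by positivity)
    (by simpa using (h.tendsto hlead).add (h.saddleShift_tendsto y))
    (left_ne_zero_of_mul hlead.mul_slope_pos.ne')

theorem expansion (h : SaddleFamily l x u κ θ ξ v ρ t k C R) (hβ : betaT κ ξ t ≠ 0) (hξ : ξ ≠ 0)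
    (hρ : ρ ∈ Set.Ioo (-1 : ℝ) 1)
    (hlead : IsLeadingOrder (betaT κ ξ t) (decayedVar κ v t) k a₀ e₀) {e₁ : ℝ}
    (he₁ : e₁ = a₀ * (2 * cirShape κ θ ξ * betaT κ ξ t - decayedVar κ v t / 2) / (2 * k))
    (y : ℝ) :
    HasSecondOrderExpansion l (fun i => (x i : ℂ))
      (fun i => -Complex.I * y * k * (x i : ℂ)⁻¹ + ((x i : ℂ) ^ 4)⁻¹ *
        (hestLambdaC κ θ ξ v ρ t ((x i ^ 4) ^ 2) (u i + saddleShift (x i) y) -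
          hestLambdaC κ θ ξ v ρ t ((x i ^ 4) ^ 2) (u i)))
      (-2 * decayedVar κ v t * (y : ℂ) ^ 2 / (e₀ : ℂ) ^ 3)
      (-4 * Complex.I * (y : ℂ) ^ 3 * decayedVar κ v t * betaT κ ξ t * a₀ / (e₀ : ℂ) ^ 4)
      ((y : ℂ) ^ 2 * (decayedVar κ v t * (3 * (e₀ : ℂ) ^ 2 + 12 * e₁) / (2 * (e₀ : ℂ) ^ 4) -
          2 * cirShape κ θ ξ * betaT κ ξ t / (e₀ : ℂ) ^ 2) +
        (y : ℂ) ^ 4 * (8 * decayedVar κ v t * betaT κ ξ t / (e₀ : ℂ) ^ 5)) := by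
  refine (exponent_expansion h.ofReal_tendsto_zero (Complex.ofReal_ne_zero.mpr hβ)
    (by exact_mod_cast hlead.mul_sq_eq_one) (Complex.ofReal_ne_zero.mpr hlead.gap_pos.ne')
    (h.scaledGap_expansion hlead he₁) (h.scaledCurvature_isBigO y)
    (h.taylorRemainder_smoothA_isBigO y)
    (h.scaledDecrease_expansion hlead he₁ y)).congr' ?_ rfl rfl rfl
  filter_upwards [h.saddleAt, h.pos, h.eventually_norm_add_saddleShift_le y,
    h.eventually_isNondegenerate_add_saddleShift hξ hρ hlead y,
    h.eventually_mul_scaledDecrease_ne_one hlead y] with i hi hx hnorm hdeg hne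
  exact (hi.exponent_eq hξ hβ hx (by linarith) hdeg hne).symm

end SaddleFamily

/-! ### The coefficients -/

lemma sgn'_sq (k : ℝ) : sgn' k ^ 2 = 1 := by
  unfold sgn'
  split_ifs <;> norm_num

lemma sgn'_mul_self (k : ℝ) : sgn' k * k = |k| := by
  unfold sgn'
  split_ifs with h
  · rw [one_mul, abs_of_nonneg h]
  · rw [neg_one_mul, abs_of_neg (not_le.mp h)]

section Coefficients

variable {κ θ ξ v ρ t k u : ℝ}

local notation "α" => cirShape κ θ ξ
local notation "β" => betaT κ ξ t
local notation "V" => decayedVar κ v t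
local notation "a₀" => coefA0 κ θ ξ v ρ t k
local notation "e₀" => coefE0 κ θ ξ v ρ t k

lemma coefA0_mul_self : a₀ * k = |k| / √β := by
  rw [coefA0, div_mul_eq_mul_div, sgn'_mul_self]

lemma betaT_mul_coefA0_sq (hβ : 0 < β) :
    β * a₀ ^ 2 = 1 := by
  rw [coefA0, div_pow, sgn'_sq, Real.sq_sqrt hβ.le, mul_one_div_cancel hβ.ne']

lemma coefA0_ne_zero (hβ : 0 < β) : a₀ ≠ 0 := by
  intro h
  simpa [h] using betaT_mul_coefA0_sq (θ := θ) (v := v) (ρ := ρ) (k := k) hβ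

lemma exp_half_sq (x : ℝ) : Real.exp (x / 2) ^ 2 = Real.exp x := by
  rw [← Real.exp_nat_mul]
  congr 1
  push_cast
  ring

lemma coefE0_eq (hβ : 0 < β) : e₀ =
    √v * Real.exp (-(κ * t) / 2) / (√|k| * β ^ ((1 : ℝ) / 4)) := by
  have ha := coefA0_ne_zero (θ := θ) (v := v) (ρ := ρ) (k := k) hβ
  rw [coefE0, coefA1]
  field_simp

lemma coefE0_sq (hβ : 0 < β) (hv : 0 ≤ v) :
    e₀ ^ 2 = V / (|k| * √β) := by
  have hquarter : (β ^ ((1 : ℝ) / 4)) ^ 2 = √β := by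
    rw [← Real.rpow_natCast, ← Real.rpow_mul hβ.le, Real.sqrt_eq_rpow]
    norm_num
  rw [coefE0_eq hβ, div_pow, mul_pow, mul_pow, exp_half_sq, hquarter, Real.sq_sqrt hv,
    Real.sq_sqrt (abs_nonneg k), decayedVar]

lemma isLeadingOrder_coef (hβ : 0 < β) (hv : 0 < v) (hk : k ≠ 0) :
    IsLeadingOrder β V k a₀
      e₀ where
  variance_pos := by
    unfold decayedVar
    positivity
  mul_sq_eq_one := betaT_mul_coefA0_sq hβ
  mul_slope_pos := by
    rw [coefA0_mul_self]
    positivity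
  gap_pos := by
    rw [coefE0_eq hβ]
    positivity
  slope_mul_sq := by
    have hsgn : sgn' k ≠ 0 := fun h => by simpa [h] using sgn'_sq k
    rw [coefE0_sq hβ hv.le, coefA0, ← sgn'_mul_self]
    field_simp
    linear_combination (-V) * sgn'_sq k

lemma coefA1_eq (h : IsLeadingOrder β V k
    a₀ e₀) :
    coefA1 κ θ ξ v ρ t k = -(a₀ * e₀ / 2) := by
  have ha := left_ne_zero_of_mul h.mul_slope_pos.ne'
  rw [coefE0]
  field_simp

lemma coefE1_eq (hξ : ξ ≠ 0) (hβ : 0 < β) (h : IsLeadingOrder β V k a₀ e₀) :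
    coefE1 κ θ ξ v ρ t k = a₀ * (2 * α * β - V / 2) / (2 * k) := by
  have hk : k ≠ 0 := right_ne_zero_of_mul h.mul_slope_pos.ne'
  have ha : a₀ ≠ 0 := coefA0_ne_zero hβ
  have habs : |k| * √β = k * (β * a₀) := by
    have hsqrt : √β ≠ 0 := (Real.sqrt_pos.mpr hβ).ne'
    have : |k| = a₀ * k * √β := by
      rw [coefA0_mul_self, div_mul_cancel₀ _ hsqrt]
    rw [this]
    linear_combination a₀ * k * Real.sq_sqrt hβ.le
  have hmean : κ * θ / (|k| * ξ ^ 2 * √β) = α / 2 / (k * (β * a₀)) := by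
    rw [← habs, cirShape]
    field_simp
  rw [coefE1, coefR, coefA1_eq h, hmean]
  field_simp
  linear_combination (-β * a₀ ^ 3) * h.slope_mul_sq +
    (-4 * α - a₀ ^ 2 * V) * h.mul_sq_eq_one

lemma coefE1_eq_sq_mul (hξ : ξ ≠ 0) (hβ : 0 < β) (h : IsLeadingOrder β V k a₀ e₀) :
    coefE1 κ θ ξ v ρ t k = e₀ ^ 2 * (α * β / V - 1 / 4) := by
  have hk : k ≠ 0 := right_ne_zero_of_mul h.mul_slope_pos.ne'
  have hV := h.variance_pos.ne'
  rw [coefE1_eq hξ hβ h]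
  field_simp
  linear_combination (-16 * α * β + 4 * V) * h.slope_mul_sq

lemma coefZeta_sq (hv : 0 ≤ v) (he : 0 ≤ e₀) : coefZeta κ θ ξ v ρ t k ^ 2 = 4 * V / e₀ ^ 3 := by
  have hpow : (e₀ ^ ((3 : ℝ) / 2)) ^ 2 = e₀ ^ 3 := by
    rw [← Real.rpow_natCast, ← Real.rpow_mul he, ← Real.rpow_natCast]
    norm_num
  rw [coefZeta, div_pow, mul_pow, mul_pow, exp_half_sq, Real.sq_sqrt hv, hpow, decayedVar]
  ring

lemma coefPsi0_eq (hξ : ξ ≠ 0) (hβ : 0 < β) (h : IsLeadingOrder β V k a₀ e₀) :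
    coefPsi0 κ θ ξ v ρ t k = -(2 * a₀ * α * β / e₀) := by
  have hV := h.variance_pos.ne'
  have he := h.gap_pos.ne'
  rw [coefPsi0, coefA1_eq h, coefE1_eq_sq_mul hξ hβ h, mul_assoc a₀ v, ← decayedVar]
  field_simp
  linear_combination a₀ * (-8 * V - 16 * α * β) * h.mul_sq_eq_one

lemma coefPsi1_eq : coefPsi1 κ θ ξ v ρ t k = -4 * V * β * a₀ / e₀ ^ 4 := by
  rw [coefPsi1, decayedVar]
  ring

lemma coefPsi2_eq (hξ : ξ ≠ 0) (hβ : 0 < β) (h : IsLeadingOrder β V k a₀ e₀) :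
    coefPsi2 κ θ ξ v ρ t k =
      V * (3 * e₀ ^ 2 + 12 * coefE1 κ θ ξ v ρ t k) / (2 * e₀ ^ 4) := by
  have hV := h.variance_pos.ne'
  have he := h.gap_pos.ne'
  rw [coefPsi2, coefA1_eq h, coefE1_eq_sq_mul hξ hβ h, ← decayedVar]
  field_simp
  linear_combination (40 * V + 96 * α * β) * h.mul_sq_eq_one

lemma coefPsi3_eq : coefPsi3 κ θ ξ v ρ t k = 8 * V * β / e₀ ^ 5 := by
  rw [coefPsi3, decayedVar]
  ring

lemma four_mul_div_sq_eq (x : ℝ) : 4 * κ * θ * x / ξ ^ 2 = 2 * α * x := by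
  rw [cirShape]
  ring

lemma coefPhi2a_eq (hξ : ξ ≠ 0) (hβ : 0 < β) (h : IsLeadingOrder β V k a₀ e₀) :
    coefPhi2a κ θ ξ v ρ t k =
      V * (3 * e₀ ^ 2 + 12 * coefE1 κ θ ξ v ρ t k) / (2 * e₀ ^ 4) - 2 * α * β / e₀ ^ 2 := by
  have he := h.gap_pos.ne'
  have hlog : 2 * α * β * (2 * κ * θ + ξ ^ 2) / (e₀ ^ 2 * ξ ^ 2) =
      2 * α * β * (α + 1) / e₀ ^ 2 := by
    rw [cirShape]
    field_simp
  rw [coefPhi2a, coefPsi2_eq hξ hβ h, coefPsi0_eq hξ hβ h, four_mul_div_sq_eq, hlog]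
  field_simp
  linear_combination 4 * α ^ 2 * β * e₀ ^ 2 * h.mul_sq_eq_one

lemma coefPhi2b_eq (hξ : ξ ≠ 0) (hβ : 0 < β) (h : IsLeadingOrder β V k a₀ e₀) :
    coefPhi2b κ θ ξ v ρ t k = 8 * V * β / e₀ ^ 5 := by
  rw [coefPhi2b, coefPsi3_eq, coefPsi0_eq hξ hβ h, four_mul_div_sq_eq]
  ring

lemma phi1C_eq (hξ : ξ ≠ 0) (hβ : 0 < β) (h : IsLeadingOrder β V k a₀ e₀) :
    phi1C κ θ ξ v ρ t k u = -4 * Complex.I * (u : ℂ) ^ 3 * V * β * a₀ / (e₀ : ℂ) ^ 4 := by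
  have hcancel : coefPsi0 κ θ ξ v ρ t k + 4 * a₀ * κ * θ * β / (e₀ * ξ ^ 2) = 0 := by
    rw [coefPsi0_eq hξ hβ h, cirShape]
    ring
  rw [phi1C, hcancel, coefPsi1_eq]
  push_cast
  ring

lemma phi2R_eq (hξ : ξ ≠ 0) (hβ : 0 < β) (h : IsLeadingOrder β V k a₀ e₀) :
    (phi2R κ θ ξ v ρ t k u : ℂ) =
      (u : ℂ) ^ 2 * (V * (3 * (e₀ : ℂ) ^ 2 + 12 * coefE1 κ θ ξ v ρ t k) / (2 * (e₀ : ℂ) ^ 4) -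
          2 * α * β / (e₀ : ℂ) ^ 2) +
        (u : ℂ) ^ 4 * (8 * V * β / (e₀ : ℂ) ^ 5) + phi1C κ θ ξ v ρ t k u ^ 2 / 2 := by
  rw [phi2R, coefPhi2a_eq hξ hβ h, coefPhi2b_eq hξ hβ h, coefPhi2c, coefPsi1_eq,
    phi1C_eq hξ hβ h]
  push_cast
  linear_combination
    (-(u : ℂ) ^ 6 * (16 * (V : ℂ) ^ 2 * β ^ 2 * a₀ ^ 2 / e₀ ^ 8) / 2) * Complex.I_sq

end Coefficients

/-! ### Eighth roots of the maturity -/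

lemma rpow_eighth_pow {τ : ℝ} (hτ : 0 ≤ τ) (n : ℕ) :
    (τ ^ ((1 : ℝ) / 8)) ^ n = τ ^ ((n : ℝ) / 8) := by
  rw [← Real.rpow_natCast, ← Real.rpow_mul hτ, one_div_mul_eq_div]

lemma rpow_eighth_pow_four {τ : ℝ} (hτ : 0 ≤ τ) : (τ ^ ((1 : ℝ) / 8)) ^ 4 = √τ := by
  rw [rpow_eighth_pow hτ, Real.sqrt_eq_rpow]
  norm_num

lemma tendsto_rpow_eighth : Tendsto (fun τ : ℝ => τ ^ ((1 : ℝ) / 8)) (𝓝[>] 0) (𝓝 0) := by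
  have h := (Real.continuousAt_rpow_const 0 ((1 : ℝ) / 8) (Or.inr (by norm_num))).tendsto
  rw [Real.zero_rpow (by norm_num)] at h
  exact h.mono_left nhdsWithin_le_nhds

lemma tendsto_sqrt_nhdsGT_zero : Tendsto Real.sqrt (𝓝[>] 0) (𝓝[>] 0) := by
  refine tendsto_nhdsWithin_iff.mpr ⟨?_, ?_⟩
  · simpa only [Real.sqrt_zero] using
      (Real.continuous_sqrt.tendsto 0).mono_left (nhdsWithin_le_nhds (s := Set.Ioi 0))
  · filter_upwards [self_mem_nhdsWithin] with τ hτ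
    exact Real.sqrt_pos.mpr hτ

section Maturity

variable {κ θ ξ v ρ t k : ℝ} {ustar : ℝ → ℝ}

lemma exists_saddleFamily (hκ : 0 < κ) (hθ : θ ≠ 0) (hξ : ξ ≠ 0) (hρ : ρ ∈ Set.Ioo (-1 : ℝ) 1)
    (ht : 0 < t) (hk : k ≠ 0)
    (hustar : ∀ᶠ τ in 𝓝[>] (0 : ℝ), ustar τ ∈ hestDom κ θ ξ v ρ t τ ∧
      deriv (hestLambda κ θ ξ v ρ t τ) (ustar τ) = (k : ℂ)) :
    ∃ C R, SaddleFamily (𝓝[>] 0) (fun τ => τ ^ ((1 : ℝ) / 8)) ustar κ θ ξ v ρ t k C R := by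
  obtain ⟨C, R, hsaddle⟩ := exists_eventually_saddleAt (v := v) hκ hθ hξ hρ ht hk
  refine ⟨C, R, tendsto_rpow_eighth, ?_, ?_⟩
  · filter_upwards [self_mem_nhdsWithin] with τ hτ
    exact Real.rpow_pos_of_pos hτ _
  · filter_upwards [self_mem_nhdsWithin, tendsto_sqrt_nhdsGT_zero.eventually hsaddle, hustar]
      with τ (hτ : 0 < τ) hsaddle ⟨hmem, hderiv⟩
    rw [Real.sq_sqrt hτ.le] at hsaddle
    rw [rpow_eighth_pow_four hτ.le]
    exact hsaddle _ hmem hderiv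

lemma hestPhi_eq_cexp {τ x : ℝ} (hτ : 0 < τ) (hx : x = τ ^ ((1 : ℝ) / 8)) (u : ℝ) :
    hestPhi κ θ ξ v ρ t k ustar τ u =
      Complex.exp (-Complex.I * u * k * (x : ℂ)⁻¹ +
        ((x : ℂ) ^ 4)⁻¹ *
          (hestLambdaC κ θ ξ v ρ t ((x ^ 4) ^ 2) (ustar τ + saddleShift x u) -
            hestLambdaC κ θ ξ v ρ t ((x ^ 4) ^ 2) (ustar τ))) := by
  have hroot : τ ^ (-(1 : ℝ) / 8) = x⁻¹ := by
    rw [hx, neg_div, Real.rpow_neg hτ.le]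
  have hinvSqrt : τ ^ (-(1 : ℝ) / 2) = (x ^ 4)⁻¹ := by
    rw [hx, rpow_eighth_pow_four hτ.le, neg_div, Real.rpow_neg hτ.le, Real.sqrt_eq_rpow]
  have hcube : τ ^ ((3 : ℝ) / 8) = x ^ 3 := by
    rw [hx, rpow_eighth_pow hτ.le, Nat.cast_ofNat]
  have hτx : (x ^ 4) ^ 2 = τ := by
    rw [hx, rpow_eighth_pow_four hτ.le, Real.sq_sqrt hτ.le]
  rw [hestPhi, hroot, hinvSqrt, hcube, hτx, saddleShift]
  push_cast
  rfl

lemma cexp_leading_eq (hv : 0 ≤ v) (he : 0 ≤ coefE0 κ θ ξ v ρ t k) (u : ℝ) :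
    Complex.exp (-2 * decayedVar κ v t * (u : ℂ) ^ 2 / (coefE0 κ θ ξ v ρ t k : ℂ) ^ 3) =
      (Real.exp (-(coefZeta κ θ ξ v ρ t k) ^ 2 * u ^ 2 / 2) : ℝ) := by
  rw [coefZeta_sq hv he]
  push_cast
  congr 1
  ring

theorem hestPhi_expansion (hκ : 0 < κ) (hθ : θ ≠ 0) (hξ : ξ ≠ 0) (hv : 0 < v)
    (hρ : ρ ∈ Set.Ioo (-1 : ℝ) 1) (ht : 0 < t) (hk : k ≠ 0)
    (hustar : ∀ᶠ τ in 𝓝[>] (0 : ℝ), ustar τ ∈ hestDom κ θ ξ v ρ t τ ∧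
      deriv (hestLambda κ θ ξ v ρ t τ) (ustar τ) = (k : ℂ)) (u : ℝ) :
    HasSecondOrderExpansion (𝓝[>] 0) (fun τ : ℝ => ((τ ^ ((1 : ℝ) / 8) : ℝ) : ℂ))
      (fun τ => hestPhi κ θ ξ v ρ t k ustar τ u)
      (Real.exp (-(coefZeta κ θ ξ v ρ t k) ^ 2 * u ^ 2 / 2) : ℝ)
      ((Real.exp (-(coefZeta κ θ ξ v ρ t k) ^ 2 * u ^ 2 / 2) : ℝ) * phi1C κ θ ξ v ρ t k u)
      ((Real.exp (-(coefZeta κ θ ξ v ρ t k) ^ 2 * u ^ 2 / 2) : ℝ) * phi2R κ θ ξ v ρ t k u) := by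
  have hβ := betaT_pos hκ hξ ht
  have hlead := isLeadingOrder_coef (θ := θ) (ρ := ρ) hβ hv hk
  have hexp := cexp_leading_eq hv.le hlead.gap_pos.le u
  obtain ⟨C, R, hsaddle⟩ := exists_saddleFamily hκ hθ hξ hρ ht hk hustar
  refine ((hsaddle.expansion hβ.ne' hξ hρ hlead (coefE1_eq hξ hβ hlead) u).cexp
    hsaddle.ofReal_tendsto_zero).congr' ?_ hexp ?_ ?_
  · filter_upwards [self_mem_nhdsWithin] with τ hτ
    exact (hestPhi_eq_cexp hτ rfl u).symm
  · rw [hexp, phi1C_eq hξ hβ hlead]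
  · rw [hexp, phi2R_eq hξ hβ hlead, phi1C_eq hξ hβ hlead]

end Maturity

theorem stmt15 (κ θ ξ v ρ t : ℝ) (hκ : 0 < κ) (hθ : 0 < θ) (hξ : 0 < ξ)
    (hv : 0 < v) (hρ : ρ ∈ Set.Ioo (-1 : ℝ) 1) (ht : 0 < t)
    (k : ℝ) (hk : k ≠ 0) (ustar : ℝ → ℝ)
    (hustar : ∀ᶠ τ in 𝓝[>] (0 : ℝ), ustar τ ∈ hestDom κ θ ξ v ρ t τ ∧
      deriv (hestLambda κ θ ξ v ρ t τ) (ustar τ) = (k : ℂ)) (u : ℝ) :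
    (fun τ : ℝ => hestPhi κ θ ξ v ρ t k ustar τ u -
        ((Real.exp (-(coefZeta κ θ ξ v ρ t k) ^ 2 * u ^ 2 / 2) : ℝ) : ℂ) *
          (1 + phi1C κ θ ξ v ρ t k u * ((τ ^ ((1 : ℝ) / 8) : ℝ) : ℂ) +
            ((phi2R κ θ ξ v ρ t k u : ℝ) : ℂ) * ((τ ^ ((1 : ℝ) / 4) : ℝ) : ℂ)))
      =O[𝓝[>] (0 : ℝ)] fun τ : ℝ => τ ^ ((3 : ℝ) / 8) := by
  have hΦ := hestPhi_expansion hκ hθ.ne' hξ.ne' hv hρ ht hk hustar u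
  refine hΦ.norm_right.congr' ?_ ?_
  · filter_upwards [self_mem_nhdsWithin] with τ (hτ : 0 < τ)
    have hsq : τ ^ ((1 : ℝ) / 4) = (τ ^ ((1 : ℝ) / 8)) ^ 2 := by
      rw [rpow_eighth_pow hτ.le]
      norm_num
    rw [hsq]
    push_cast
    ring
  · filter_upwards [self_mem_nhdsWithin] with τ (hτ : 0 < τ)
    rw [norm_pow, Complex.norm_real, Real.norm_of_nonneg (by positivity),
      rpow_eighth_pow hτ.le, Nat.cast_ofNat]

end
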